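/- arXiv:0801.0233 — 3 statements merged into one kernel-verified Lean document; each statement's English description precedes it below -/
import Mathlib

section
/- Let r ≥ 1 and let λ̄ = (λ^{(1)},…,λ^{(r)}) be a sequence of partitions in P_n. For each i ∈ {1,…,n−1} there exists an involution s_i : B_λ̄ → B_λ̄ (the Bender–Knuth-type involution on barred skew tableaux) such that for every T ∈ B_λ̄: (i) c_{s_iT}(y) = c_T(y), and (ii) ω(s_iT) = σ_i·ω(T), where σ_i ∈ S_n is the simple transposition exchanging i and i+1 acting on ℕ^n by permuting coordinates. -/
open Finset MvPolynomial

attribute [local instance] Classical.propDecidable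

/-- A partition in `P_n`: a weakly decreasing sequence of naturals. -/
def IsPartition {n : ℕ} (lam : Fin n → ℕ) : Prop := Antitone lam

/-- The cells of the Young diagram of `lam`, as pairs (row, column), 0-based. -/
noncomputable def cells {n : ℕ} (lam : Fin n → ℕ) : Finset (Fin n × ℕ) :=
  (Finset.univ ×ˢ Finset.range (Finset.univ.sup lam)).filter fun c => c.2 < lam c.1

/-- Semistandardness for a filling with values in `Fin n` (0-based values):
rows weakly increase, columns strictly increase. -/
def IsSSYT {n : ℕ} (lam : Fin n → ℕ) (T : cells lam → Fin n) : Prop :=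
  (∀ c d : cells lam, (c : Fin n × ℕ).1 = (d : Fin n × ℕ).1 →
      (c : Fin n × ℕ).2 ≤ (d : Fin n × ℕ).2 → T c ≤ T d) ∧
  (∀ c d : cells lam, (c : Fin n × ℕ).2 = (d : Fin n × ℕ).2 →
      (c : Fin n × ℕ).1 < (d : Fin n × ℕ).1 → T c < T d)

/-- The y-subscript `a + c(a) - r(a)` of a cell (1-based value and coordinates). -/
def ysub {n : ℕ} (a : Fin n) (c : Fin n × ℕ) : ℤ := (a : ℤ) + 1 + (c.2 : ℤ) - ((c.1 : ℕ) : ℤ)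

/-- The Schur polynomial `s_lam(x)`, in the ring with `x`-variables `Sum.inl i`
and `y`-variables `Sum.inr (i, k)` (family `i`, subscript `k`). -/
noncomputable def schur (n r : ℕ) (lam : Fin n → ℕ) :
    MvPolynomial (Fin n ⊕ Fin r × ℤ) ℤ :=
  ∑ T ∈ Finset.univ.filter (IsSSYT lam), ∏ c : cells lam, X (Sum.inl (T c))

/-- The factorial Schur polynomial `s_lam(x | y^{(i)})`. -/
noncomputable def factSchur (n r : ℕ) (i : Fin r) (lam : Fin n → ℕ) :
    MvPolynomial (Fin n ⊕ Fin r × ℤ) ℤ :=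
  ∑ T ∈ Finset.univ.filter (IsSSYT lam),
    ∏ c : cells lam,
      (X (Sum.inl (T c)) + X (Sum.inr (i, ysub (T c) (c : Fin n × ℕ))))

/-- A barred filling of a single Young diagram: an entry is a value in `Fin n`
(0-based) together with a `Bool` recording whether it is barred.  Rows weakly
increase and columns strictly increase in value, disregarding bars. -/
def IsBarred {n : ℕ} (lam : Fin n → ℕ) (T : cells lam → Fin n × Bool) : Prop :=
  (∀ c d : cells lam, (c : Fin n × ℕ).1 = (d : Fin n × ℕ).1 →
      (c : Fin n × ℕ).2 ≤ (d : Fin n × ℕ).2 → (T c).1 ≤ (T d).1) ∧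
  (∀ c d : cells lam, (c : Fin n × ℕ).2 = (d : Fin n × ℕ).2 →
      (c : Fin n × ℕ).1 < (d : Fin n × ℕ).1 → (T c).1 < (T d).1)

/-- A barred skew tableau of shape `λ̄ = (lam 0, …, lam (r-1))`: since consecutive
diagrams are placed strictly below and to the left of the preceding one, no two
diagrams share a row or a column, so such a tableau is exactly a tuple of barred
fillings of the individual diagrams. -/
def IsBarredSkew {n r : ℕ} (lam : Fin r → Fin n → ℕ)
    (T : (i : Fin r) → cells (lam i) → Fin n × Bool) : Prop :=
  ∀ i, IsBarred (lam i) (T i)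

/-- Unbarred content of a barred filling of one diagram. -/
noncomputable def content1 {n : ℕ} (lam : Fin n → ℕ) (T : cells lam → Fin n × Bool)
    (k : Fin n) : ℕ :=
  (Finset.univ.filter fun c : cells lam => T c = (k, false)).card

/-- Unbarred content `ω(T)` of a barred skew tableau. -/
noncomputable def contentT {n r : ℕ} (lam : Fin r → Fin n → ℕ)
    (T : (i : Fin r) → cells (lam i) → Fin n × Bool) (k : Fin n) : ℕ :=
  ∑ i, content1 (lam i) (T i) k

/-- The monomial `c_T(y)` contributed by the barred entries of one diagram
(living in the ring of `y`-variables only). -/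
noncomputable def cT1 {n : ℕ} (r : ℕ) (i : Fin r) (lam : Fin n → ℕ)
    (T : cells lam → Fin n × Bool) : MvPolynomial (Fin r × ℤ) ℤ :=
  ∏ c ∈ Finset.univ.filter (fun c : cells lam => (T c).2 = true),
    X (i, ysub (T c).1 (c : Fin n × ℕ))

/-- The monomial `c_T(y)` of a barred skew tableau. -/
noncomputable def cT {n r : ℕ} (lam : Fin r → Fin n → ℕ)
    (T : (i : Fin r) → cells (lam i) → Fin n × Bool) : MvPolynomial (Fin r × ℤ) ℤ :=
  ∏ i, cT1 r i (lam i) (T i)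

/-- The unbarred column word of a barred filling of one diagram: unbarred values
(0-based) read down each column, from the rightmost column to the leftmost. -/
noncomputable def colWord1 {n : ℕ} (lam : Fin n → ℕ)
    (T : cells lam → Fin n × Bool) : List ℕ :=
  ((List.range (Finset.univ.sup lam)).reverse).flatMap fun j =>
    (List.finRange n).filterMap fun i =>
      if h : (i, j) ∈ cells lam then
        (if (T ⟨(i, j), h⟩).2 = false then some ((T ⟨(i, j), h⟩).1 : ℕ) else none)
      else none

/-- The unbarred column word of a barred skew tableau: diagram `lam 0` is the
rightmost, so its word comes first. -/
noncomputable def colWord {n r : ℕ} (lam : Fin r → Fin n → ℕ)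
    (T : (i : Fin r) → cells (lam i) → Fin n × Bool) : List ℕ :=
  (List.finRange r).flatMap fun i => colWord1 (lam i) (T i)

/-- A word (with 0-based values) is Yamanouchi if every initial segment contains
at least as many `k`'s as `(k+1)`'s, for every `k`. -/
def IsYam (w : List ℕ) : Prop :=
  ∀ t k, ((w.take t).count (k + 1)) ≤ (w.take t).count k

/-- The alternant `a_ξ(x) = det[(x_i)^{ξ_j}]`. -/
noncomputable def avand (n r : ℕ) (xi : Fin n → ℕ) :
    MvPolynomial (Fin n ⊕ Fin r × ℤ) ℤ :=
  Matrix.det (Matrix.of fun i j : Fin n =>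
    (X (Sum.inl i) : MvPolynomial (Fin n ⊕ Fin r × ℤ) ℤ) ^ xi j)

/-- `ρ = (n-1, n-2, …, 0)`. -/
def rhoPart (n : ℕ) : Fin n → ℕ := fun i => n - 1 - (i : ℕ)

/-!
Fix consecutive values `lo ⋖ hi`. A `lo` directly above a `hi` in the same column has the same
`y`-subscript as that `hi`, so such a pair is kept in place and only exchanges its bars. The
remaining `lo`s and `hi`s of a row form a contiguous block `lo … lo hi … hi` in which the values may
be chosen freely subject to weak increase. A `hi` has the `y`-subscript that a `lo` one column
further right would have, so let a `lo` in column `j` occupy slot `j` and a `hi` slot `j + 1`: the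
subscript of an entry is then a function of its slot, and exactly one slot, between the `lo`s and
the `hi`s, is vacant. Keeping the set of slots of barred entries fixed, the block is determined by
the position of the vacancy among the other slots. Reflecting this position preserves the barred
weight and interchanges the number of unbarred `lo`s (open slots below the vacancy) with the number
of unbarred `hi`s (open slots above it).
-/

namespace BenderKnuth

section Reflect

variable {U : Finset ℕ} {d : ℕ}

/-- The image of `d ∈ U` under the order-reversing bijection of `U`: the element of `U` with as
many elements of `U` below it as `d` has above it. -/
noncomputable def reflect (U : Finset ℕ) (d : ℕ) : ℕ :=
  Nat.nth (· ∈ U) (#U - 1 - Nat.count (· ∈ U) d)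

theorem count_lt_card (hd : d ∈ U) : Nat.count (· ∈ U) d < #U := by
  simpa using Nat.count_lt_card (p := (· ∈ U)) U.finite_toSet hd

theorem sub_count_lt_card_toFinset (hd : d ∈ U) (hf : (Set.ofPred (· ∈ U)).Finite) :
    #U - 1 - Nat.count (· ∈ U) d < #hf.toFinset := by
  have hU : hf.toFinset = U := by ext; simp
  have := count_lt_card hd
  rw [hU]
  omega

theorem reflect_mem (hd : d ∈ U) : reflect U d ∈ U :=
  Nat.nth_mem (p := (· ∈ U)) _ (sub_count_lt_card_toFinset hd)

theorem count_reflect (hd : d ∈ U) :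
    Nat.count (· ∈ U) (reflect U d) = #U - 1 - Nat.count (· ∈ U) d :=
  Nat.count_nth (p := (· ∈ U)) (sub_count_lt_card_toFinset hd)

theorem reflect_reflect (hd : d ∈ U) : reflect U (reflect U d) = d := by
  have := count_lt_card hd
  rw [reflect, count_reflect hd, show #U - 1 - (#U - 1 - Nat.count (· ∈ U) d)
    = Nat.count (· ∈ U) d by omega]
  exact Nat.nth_count (p := (· ∈ U)) hd

end Reflect

section Word

variable {α M : Type*} [CommMonoid M]

/-- The contribution of an entry `e` in row `r` and column `j` to the weight of a filling: an
unbarred `a` contributes `x a`, a barred one `y a r j`. -/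
def entryWeight {β : Type*} (x : α → M) (y : α → β → ℕ → M) (r : β) (j : ℕ) (e : α × Bool) : M :=
  if e.2 then y e.1 r j else x e.1

/-- The slot occupied by column `j` of a row of `lo`s and `hi`s in which `d` is the number of
`lo`s: entries `lo` occupy the slot with the number of their column, entries `hi` the next one, so
that `d` is the one slot left vacant. -/
def slot (d j : ℕ) : ℕ :=
  if j < d then j else j + 1

/-- The entry in column `j` of the row of `lo`s and `hi`s whose vacant slot is `d` and whose barred
entries are those with slot not in `U`. -/
def slotEntry (lo hi : α) (U : Finset ℕ) (d j : ℕ) : α × Bool :=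
  (if j < d then lo else hi, decide (slot d j ∉ U))

theorem slot_ne (d j : ℕ) : slot d j ≠ d := by
  unfold slot
  split_ifs <;> omega

theorem slot_injective (d : ℕ) : Function.Injective (slot d) := fun j k h => by
  unfold slot at h
  split_ifs at h <;> omega

theorem slot_mem_Icc {a b d j : ℕ} (hj : j ∈ Ico a b) : slot d j ∈ Icc a b := by
  rw [mem_Ico] at hj
  rw [mem_Icc, slot]
  split_ifs <;> omega

theorem exists_slot_eq {a b d p : ℕ} (hd : d ∈ Icc a b) (hp : p ∈ Icc a b) (hne : p ≠ d) :
    ∃ j ∈ Ico a b, slot d j = p := by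
  simp only [mem_Icc, mem_Ico] at hd hp ⊢
  rcases hne.lt_or_gt with h | h
  · exact ⟨p, by omega, if_pos h⟩
  · exact ⟨p - 1, by omega, by rw [slot, if_neg (by omega)]; omega⟩

theorem prod_ite_mem_eq_pow_mul_prod_sdiff (s U : Finset ℕ) (x : M) (f : ℕ → M) :
    ∏ p ∈ s, (if p ∈ U then x else f p) = x ^ #(s ∩ U) * ∏ p ∈ s \ U, f p := by
  rw [prod_ite, prod_const, filter_mem_eq_inter, filter_notMem_eq_sdiff]

variable {U : Finset ℕ} {a b d : ℕ}

theorem card_Ico_inter_eq_count (hU : U ⊆ Icc a b) : #(Ico a d ∩ U) = Nat.count (· ∈ U) d := by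
  rw [Nat.count_eq_card_filter_range]
  congr 1
  ext p
  have := @hU p
  simp only [mem_inter, mem_Ico, mem_filter, mem_range, mem_Icc] at this ⊢
  tauto

theorem card_Ico_succ_inter_eq_card_sub_count (hU : U ⊆ Icc a b) (hd : d ∈ U) :
    #(Ico (d + 1) (b + 1) ∩ U) = #U - 1 - Nat.count (· ∈ U) d := by
  have hunion : U.erase d = (Ico a d ∩ U) ∪ (Ico (d + 1) (b + 1) ∩ U) := by
    ext p
    have := @hU p
    simp only [mem_inter, mem_Ico, mem_erase, mem_union, mem_Icc] at this ⊢
    grind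
  have hdisj : Disjoint (Ico a d ∩ U) (Ico (d + 1) (b + 1) ∩ U) :=
    disjoint_left.2 fun p => by simp only [mem_inter, mem_Ico]; omega
  have := congrArg card hunion
  rw [card_erase_of_mem hd, card_union_of_disjoint hdisj, card_Ico_inter_eq_count hU] at this
  omega

variable {β : Type*} {lo hi : α} {x : α → M} {y : α → β → ℕ → M} {r : β}

theorem prod_entryWeight_slotEntry (hy : ∀ j, y hi r j = y lo r (j + 1))
    (hU : U ⊆ Icc a b) (hd : d ∈ U) :
    ∏ j ∈ Ico a b, entryWeight x y r j (slotEntry lo hi U d j) =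
      x lo ^ Nat.count (· ∈ U) d * x hi ^ (#U - 1 - Nat.count (· ∈ U) d) *
        ∏ p ∈ Icc a b \ U, y lo r p := by
  obtain ⟨had, hdb⟩ := mem_Icc.1 (hU hd)
  have hlo : ∏ j ∈ Ico a d, entryWeight x y r j (slotEntry lo hi U d j) =
      ∏ p ∈ Ico a d, if p ∈ U then x lo else y lo r p := by
    refine prod_congr rfl fun j hj => ?_
    simp only [slotEntry, slot, entryWeight, if_pos (mem_Ico.1 hj).2, decide_not]
    split_ifs <;> simp_all
  have hhi : ∏ j ∈ Ico d b, entryWeight x y r j (slotEntry lo hi U d j) =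
      ∏ p ∈ Ico (d + 1) (b + 1), if p ∈ U then x hi else y lo r p := by
    rw [← prod_Ico_add' (fun p => if p ∈ U then x hi else y lo r p)]
    refine prod_congr rfl fun j hj => ?_
    simp only [slotEntry, slot, entryWeight, if_neg (mem_Ico.1 hj).1.not_gt, decide_not, hy]
    split_ifs <;> simp_all
  have hsdiff : Icc a b \ U = (Ico a d \ U) ∪ (Ico (d + 1) (b + 1) \ U) := by
    ext p
    simp only [mem_sdiff, mem_Icc, mem_union, mem_Ico]
    grind
  have hdisj : Disjoint (Ico a d \ U) (Ico (d + 1) (b + 1) \ U) :=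
    disjoint_left.2 fun p => by simp only [mem_sdiff, mem_Ico]; omega
  rw [← prod_Ico_consecutive _ had hdb, hlo, hhi, prod_ite_mem_eq_pow_mul_prod_sdiff,
    prod_ite_mem_eq_pow_mul_prod_sdiff, card_Ico_inter_eq_count hU,
    card_Ico_succ_inter_eq_card_sub_count hU hd, hsdiff, prod_union hdisj, mul_mul_mul_comm]

theorem prod_entryWeight_slotEntry_reflect (hy : ∀ j, y hi r j = y lo r (j + 1))
    (hU : U ⊆ Icc a b) (hd : d ∈ U) :
    ∏ j ∈ Ico a b, entryWeight x y r j (slotEntry lo hi U (reflect U d) j) =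
      ∏ j ∈ Ico a b, entryWeight (x ∘ Equiv.swap lo hi) y r j (slotEntry lo hi U d j) := by
  have hlt := count_lt_card hd
  rw [prod_entryWeight_slotEntry hy hU (reflect_mem hd), prod_entryWeight_slotEntry hy hU hd,
    count_reflect hd, show #U - 1 - (#U - 1 - Nat.count (· ∈ U) d) = Nat.count (· ∈ U) d by omega]
  simp only [Function.comp_apply, Equiv.swap_apply_left, Equiv.swap_apply_right]
  rw [mul_comm (x lo ^ _)]

end Word

section RowLen

variable {β : Type*} {D : Finset (β × ℕ)} {P Q : D → Prop} {r : β} {j : ℕ}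

theorem lt_card_iff_mem_of_isLowerSet {s : Finset ℕ} (hs : IsLowerSet (s : Set ℕ)) :
    j < #s ↔ j ∈ s := by
  constructor
  · contrapose!
    intro hj
    have hsub : s ⊆ range j := fun k hk =>
      mem_range.2 (lt_of_not_ge fun hjk => hj (hs hjk hk))
    simpa using card_le_card hsub
  · intro hj
    have hsub : range (j + 1) ⊆ s := fun k hk => hs (Nat.lt_succ_iff.1 (mem_range.1 hk)) hj
    simpa using card_le_card hsub

/-- A property of the cells of `D` is left closed if it passes from a cell to every cell to its
left in the same row. -/
def LeftClosed (P : D → Prop) : Prop :=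
  ∀ ⦃c d : D⦄, d.1.1 = c.1.1 → d.1.2 ≤ c.1.2 → P c → P d

/-- The number of cells with property `P` in row `r`; for left closed `P` this is the column
in which `P` stops. -/
noncomputable def rowLen (P : D → Prop) (r : β) : ℕ :=
  #{c : D | c.1.1 = r ∧ P c}

theorem rowLen_le_rowLen (h : ∀ c, P c → Q c) (r : β) : rowLen P r ≤ rowLen Q r :=
  card_le_card (monotone_filter_right _ fun c _ hc => ⟨hc.1, h c hc.2⟩)

variable [PartialOrder β]

theorem LeftClosed.lt_rowLen_iff (hP : LeftClosed P) (hD : IsLowerSet (D : Set (β × ℕ))) :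
    j < rowLen P r ↔ ∃ c : D, c.1 = (r, j) ∧ P c := by
  set cols : Finset ℕ := image (fun c : D => c.1.2) {c : D | c.1.1 = r ∧ P c} with hcols
  have hmem : ∀ k, k ∈ cols ↔ ∃ c : D, c.1 = (r, k) ∧ P c := fun k => by
    simp only [hcols, mem_image, mem_filter, mem_univ, true_and, Prod.ext_iff]
    exact exists_congr fun c => by tauto
  have hcard : #cols = rowLen P r := card_image_of_injOn fun c hc d hd hcd => by
    simp only [coe_filter, mem_univ, true_and, Set.mem_ofPred_eq] at hc hd
    exact Subtype.ext (Prod.ext (hc.1.trans hd.1.symm) hcd)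
  have hlower : IsLowerSet (cols : Set ℕ) := fun k l hlk hk => by
    obtain ⟨c, hc, hPc⟩ := (hmem k).1 hk
    have hl : (r, l) ∈ D := hD (Prod.mk_le_mk.2 ⟨le_rfl, hlk⟩) (hc ▸ c.2)
    exact (hmem l).2 ⟨⟨(r, l), hl⟩, rfl, hP (by rw [hc]) (by rw [hc]; exact hlk) hPc⟩
  rw [← hcard, lt_card_iff_mem_of_isLowerSet hlower, hmem]

theorem LeftClosed.col_lt_rowLen_iff (hP : LeftClosed P) (hD : IsLowerSet (D : Set (β × ℕ)))
    (c : D) : c.1.2 < rowLen P c.1.1 ↔ P c := by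
  rw [hP.lt_rowLen_iff hD]
  exact ⟨fun ⟨d, hd, hPd⟩ => Subtype.ext (a1 := d) (a2 := c) hd ▸ hPd, fun h => ⟨c, rfl, h⟩⟩

end RowLen

/-- The semistandard condition on the values of a filling with barred entries, where bars are
recorded by the second component. -/
structure IsTableau {α β : Type*} [Preorder α] [LT β] {D : Finset (β × ℕ)}
    (T : D → α × Bool) : Prop where
  row_le : ∀ c d : D, c.1.1 = d.1.1 → c.1.2 ≤ d.1.2 → (T c).1 ≤ (T d).1
  col_lt : ∀ c d : D, c.1.2 = d.1.2 → c.1.1 < d.1.1 → (T c).1 < (T d).1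

section Tableau

variable {α β : Type*} {D : Finset (β × ℕ)} {T : D → α × Bool} {lo hi : α} {c d : D}

/-- A cell is paired if its column also contains the value obtained by exchanging `lo` and `hi`.
A cell with any other value is thus paired with itself, and the unpaired cells are the free `lo`s
and `hi`s of the classical Bender–Knuth involution. -/
def IsPaired (lo hi : α) (T : D → α × Bool) (c : D) : Prop :=
  ∃ d : D, d.1.2 = c.1.2 ∧ (T d).1 = Equiv.swap lo hi (T c).1

/-- The cell with which a paired cell `c` is paired; `c` itself if `c` is not paired. -/
noncomputable def partner (lo hi : α) (T : D → α × Bool) (c : D) : D :=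
  if h : IsPaired lo hi T c then h.choose else c

theorem IsPaired.col_partner (hc : IsPaired lo hi T c) : (partner lo hi T c).1.2 = c.1.2 := by
  rw [partner, dif_pos hc]
  exact hc.choose_spec.1

theorem IsPaired.fst_partner (hc : IsPaired lo hi T c) :
    (T (partner lo hi T c)).1 = Equiv.swap lo hi (T c).1 := by
  rw [partner, dif_pos hc]
  exact hc.choose_spec.2

theorem IsPaired.isPaired_partner (hc : IsPaired lo hi T c) :
    IsPaired lo hi T (partner lo hi T c) :=
  ⟨c, hc.col_partner.symm, by rw [hc.fst_partner, Equiv.swap_apply_self]⟩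

theorem fst_eq_or_eq_of_not_isPaired (hc : ¬ IsPaired lo hi T c) :
    (T c).1 = lo ∨ (T c).1 = hi := by
  by_contra! h
  exact hc ⟨c, rfl, (Equiv.swap_apply_of_ne_of_ne h.1 h.2).symm⟩

variable [LinearOrder α] [LinearOrder β]

theorem IsTableau.row_lt_row_iff (hT : IsTableau T) (hcd : c.1.2 = d.1.2) :
    c.1.1 < d.1.1 ↔ (T c).1 < (T d).1 := by
  refine ⟨hT.col_lt c d hcd, fun h => lt_of_not_ge fun hdc => ?_⟩
  rcases hdc.eq_or_lt with hrow | hrow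
  · exact h.ne' (by rw [Subtype.ext (Prod.ext hrow hcd.symm)])
  · exact h.not_gt (hT.col_lt d c hcd.symm hrow)

theorem IsTableau.eq_of_col_eq (hT : IsTableau T) (hcd : c.1.2 = d.1.2)
    (hval : (T c).1 = (T d).1) : c = d := by
  refine Subtype.ext (Prod.ext (le_antisymm ?_ ?_) hcd)
  · exact le_of_not_gt fun h => (hT.col_lt d c hcd.symm h).ne' hval
  · exact le_of_not_gt fun h => (hT.col_lt c d hcd h).ne hval

theorem IsTableau.partner_eq (hT : IsTableau T) (hcol : d.1.2 = c.1.2)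
    (hval : (T d).1 = Equiv.swap lo hi (T c).1) : partner lo hi T c = d :=
  have hc : IsPaired lo hi T c := ⟨d, hcol, hval⟩
  hT.eq_of_col_eq (hc.col_partner.trans hcol.symm) (hc.fst_partner.trans hval.symm)

theorem IsTableau.partner_partner (hT : IsTableau T) (hc : IsPaired lo hi T c) :
    partner lo hi T (partner lo hi T c) = c :=
  hT.partner_eq hc.col_partner.symm (by rw [hc.fst_partner, Equiv.swap_apply_self])

theorem IsTableau.row_covBy (hT : IsTableau T) (hD : IsLowerSet (D : Set (β × ℕ)))
    (hlh : lo ⋖ hi) (hcd : c.1.2 = d.1.2) (hc : (T c).1 = lo) (hd : (T d).1 = hi) :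
    c.1.1 ⋖ d.1.1 := by
  refine ⟨(hT.row_lt_row_iff hcd).2 (hc ▸ hd ▸ hlh.lt), fun r hcr hrd => ?_⟩
  have hr : (r, d.1.2) ∈ D := hD (Prod.mk_le_mk.2 ⟨hrd.le, le_rfl⟩) d.2
  have hlo := hT.col_lt c ⟨_, hr⟩ hcd hcr
  have hhi := hT.col_lt ⟨_, hr⟩ d rfl hrd
  exact hlh.2 (hc ▸ hlo) (hd ▸ hhi)

theorem IsTableau.lt_or_lt_of_not_isPaired (hT : IsTableau T) (hlh : lo ⋖ hi)
    (hc : ¬ IsPaired lo hi T c) (hcd : d.1.2 = c.1.2) (hne : d ≠ c) :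
    (d.1.1 < c.1.1 ∧ (T d).1 < lo) ∨ (c.1.1 < d.1.1 ∧ hi < (T d).1) := by
  have hval : (T d).1 ≠ (T c).1 := fun h => hne (hT.eq_of_col_eq hcd h)
  have hswap : (T d).1 ≠ Equiv.swap lo hi (T c).1 := fun h => hc ⟨d, hcd, h⟩
  rw [hT.row_lt_row_iff hcd, hT.row_lt_row_iff hcd.symm]
  rcases fst_eq_or_eq_of_not_isPaired hc with h | h
  · rw [h] at hval hswap ⊢
    rw [Equiv.swap_apply_left] at hswap
    exact hval.lt_or_gt.imp (fun h => ⟨h, h⟩) fun h => ⟨h, (hlh.ge_of_gt h).lt_of_ne' hswap⟩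
  · rw [h] at hval hswap ⊢
    rw [Equiv.swap_apply_right] at hswap
    exact hval.lt_or_gt.imp (fun h => ⟨h, (hlh.le_of_lt h).lt_of_ne hswap⟩) fun h => ⟨h, h⟩

end Tableau

section FreeCells

variable {α β : Type*} [LinearOrder α] {D : Finset (β × ℕ)} {T : D → α × Bool} {lo hi : α}
  {r : β} {j : ℕ}

/-- The column in which the values of row `r` first exceed `lo`. -/
noncomputable def lowLen (lo : α) (T : D → α × Bool) (r : β) : ℕ :=
  rowLen (fun c => (T c).1 ≤ lo) r

/-- The first column of the block of unpaired cells in row `r`. -/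
noncomputable def freeStart (lo hi : α) (T : D → α × Bool) (r : β) : ℕ :=
  rowLen (fun c => (T c).1 ≤ lo ∧ IsPaired lo hi T c) r

/-- The first column to the right of the block of unpaired cells in row `r`. -/
noncomputable def freeEnd (lo hi : α) (T : D → α × Bool) (r : β) : ℕ :=
  rowLen (fun c => (T c).1 ≤ lo ∨ ¬ IsPaired lo hi T c) r

theorem freeStart_le_lowLen : freeStart lo hi T r ≤ lowLen lo T r :=
  rowLen_le_rowLen (fun _ => And.left) r

theorem lowLen_le_freeEnd : lowLen lo T r ≤ freeEnd lo hi T r :=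
  rowLen_le_rowLen (fun _ => Or.inl) r

variable [LinearOrder β]

theorem IsTableau.leftClosed_le (hT : IsTableau T) : LeftClosed fun c => (T c).1 ≤ lo :=
  fun c d hrow hcol hc => (hT.row_le d c hrow hcol).trans hc

-- If `d` is left of `c` in a row of `lo`s, then the cell where the column of `d` meets the row of
-- the partner of `c` has value above `lo` and at most `hi`, so it is a partner for `d`.
theorem IsTableau.leftClosed_le_and_isPaired (hT : IsTableau T)
    (hD : IsLowerSet (D : Set (β × ℕ))) (hlh : lo ⋖ hi) :
    LeftClosed fun c => (T c).1 ≤ lo ∧ IsPaired lo hi T c := by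
  rintro c d hrow hcol ⟨hc, e, hec, he⟩
  have hdc := hT.row_le d c hrow hcol
  refine ⟨hdc.trans hc, by_contra fun hd => ?_⟩
  have hdlo : (T d).1 = lo :=
    (fst_eq_or_eq_of_not_isPaired hd).resolve_right ((hdc.trans hc).trans_lt hlh.lt).ne
  have hclo : (T c).1 = lo := hc.antisymm (hdlo ▸ hdc)
  rw [hclo, Equiv.swap_apply_left] at he
  have hrow' : c.1.1 < e.1.1 := (hT.row_lt_row_iff hec.symm).2 (hclo ▸ he ▸ hlh.lt)
  let f : D := ⟨(e.1.1, d.1.2), hD (Prod.mk_le_mk.2 ⟨le_rfl, hec ▸ hcol⟩) e.2⟩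
  have hfe : (T f).1 ≤ hi := he ▸ hT.row_le f e rfl (hec ▸ hcol)
  have hdf : lo < (T f).1 := hdlo ▸ hT.col_lt d f rfl (hrow ▸ hrow')
  exact hd ⟨f, rfl, by rw [hdlo, Equiv.swap_apply_left]; exact hfe.antisymm (hlh.ge_of_gt hdf)⟩

theorem IsTableau.leftClosed_le_or_not_isPaired (hT : IsTableau T)
    (hD : IsLowerSet (D : Set (β × ℕ))) (hlh : lo ⋖ hi) :
    LeftClosed fun c => (T c).1 ≤ lo ∨ ¬ IsPaired lo hi T c := by
  intro c d hrow hcol hc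
  have hdc := hT.row_le d c hrow hcol
  refine or_iff_not_imp_left.2 fun hdlo => ?_
  have hclo : ¬ (T c).1 ≤ lo := fun h => hdlo (hdc.trans h)
  have hcfree := hc.resolve_left hclo
  have hchi : (T c).1 = hi := (fst_eq_or_eq_of_not_isPaired hcfree).resolve_left fun h => hclo h.le
  have hdhi : (T d).1 = hi := (hchi ▸ hdc).antisymm (hlh.ge_of_gt (lt_of_not_ge hdlo))
  rintro ⟨e, hed, he⟩
  rw [hdhi, Equiv.swap_apply_right] at he
  have hrow' : e.1.1 < c.1.1 := hrow ▸ (hT.row_lt_row_iff hed).2 (hdhi ▸ he ▸ hlh.lt)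
  let f : D := ⟨(e.1.1, c.1.2), hD (Prod.mk_le_mk.2 ⟨hrow'.le, le_rfl⟩) c.2⟩
  have hef : lo ≤ (T f).1 := he ▸ hT.row_le e f rfl (hed ▸ hcol)
  have hfc : (T f).1 < hi := hchi ▸ hT.col_lt f c rfl hrow'
  exact hcfree ⟨f, rfl, by rw [hchi, Equiv.swap_apply_right]; exact (hlh.le_of_lt hfc).antisymm hef⟩

theorem IsTableau.col_lt_lowLen_iff (hT : IsTableau T) (hD : IsLowerSet (D : Set (β × ℕ)))
    (c : D) : c.1.2 < lowLen lo T c.1.1 ↔ (T c).1 ≤ lo :=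
  hT.leftClosed_le.col_lt_rowLen_iff hD c

theorem IsTableau.col_lt_freeStart_iff (hT : IsTableau T) (hD : IsLowerSet (D : Set (β × ℕ)))
    (hlh : lo ⋖ hi) (c : D) :
    c.1.2 < freeStart lo hi T c.1.1 ↔ (T c).1 ≤ lo ∧ IsPaired lo hi T c :=
  (hT.leftClosed_le_and_isPaired hD hlh).col_lt_rowLen_iff hD c

theorem IsTableau.col_lt_freeEnd_iff (hT : IsTableau T) (hD : IsLowerSet (D : Set (β × ℕ)))
    (hlh : lo ⋖ hi) (c : D) :
    c.1.2 < freeEnd lo hi T c.1.1 ↔ (T c).1 ≤ lo ∨ ¬ IsPaired lo hi T c :=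
  (hT.leftClosed_le_or_not_isPaired hD hlh).col_lt_rowLen_iff hD c

theorem IsTableau.not_isPaired_iff (hT : IsTableau T) (hD : IsLowerSet (D : Set (β × ℕ)))
    (hlh : lo ⋖ hi) (c : D) :
    ¬ IsPaired lo hi T c ↔ c.1.2 ∈ Ico (freeStart lo hi T c.1.1) (freeEnd lo hi T c.1.1) := by
  rw [mem_Ico, ← not_lt, hT.col_lt_freeStart_iff hD hlh, hT.col_lt_freeEnd_iff hD hlh]
  tauto

theorem IsTableau.exists_not_isPaired (hT : IsTableau T) (hD : IsLowerSet (D : Set (β × ℕ)))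
    (hlh : lo ⋖ hi) (hj : j ∈ Ico (freeStart lo hi T r) (freeEnd lo hi T r)) :
    ∃ c : D, c.1 = (r, j) ∧ ¬ IsPaired lo hi T c := by
  obtain ⟨c, hc, -⟩ :=
    ((hT.leftClosed_le_or_not_isPaired hD hlh).lt_rowLen_iff hD).1 (mem_Ico.1 hj).2
  refine ⟨c, hc, (hT.not_isPaired_iff hD hlh c).2 ?_⟩
  rwa [hc]

end FreeCells

section Map

variable {α β : Type*} [LinearOrder α] {D : Finset (β × ℕ)} {T : D → α × Bool} {lo hi : α}
  {r : β} {c : D}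

/-- The slots of the unpaired unbarred entries of row `r`, together with the vacant slot. -/
noncomputable def openSlots (lo hi : α) (T : D → α × Bool) (r : β) : Finset ℕ :=
  insert (lowLen lo T r) (image (fun c : D => slot (lowLen lo T r) c.1.2)
    {c : D | c.1.1 = r ∧ ¬ IsPaired lo hi T c ∧ (T c).2 = false})

/-- The vacant slot of row `r` after the involution. -/
noncomputable def newLowLen (lo hi : α) (T : D → α × Bool) (r : β) : ℕ :=
  reflect (openSlots lo hi T r) (lowLen lo T r)

/-- The Bender–Knuth involution: paired cells exchange their bars, and the unpaired block of each
row is rewritten with its vacancy moved to the mirror image among the open slots. -/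
noncomputable def bkMap (lo hi : α) (T : D → α × Bool) (c : D) : α × Bool :=
  if IsPaired lo hi T c then ((T c).1, (T (partner lo hi T c)).2)
  else slotEntry lo hi (openSlots lo hi T c.1.1) (newLowLen lo hi T c.1.1) c.1.2

theorem mem_openSlots {p : ℕ} : p ∈ openSlots lo hi T r ↔ p = lowLen lo T r ∨
    ∃ c : D, (c.1.1 = r ∧ ¬ IsPaired lo hi T c ∧ (T c).2 = false) ∧
      slot (lowLen lo T r) c.1.2 = p := by
  simp [openSlots]

theorem lowLen_mem_openSlots : lowLen lo T r ∈ openSlots lo hi T r :=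
  mem_insert_self _ _

theorem newLowLen_mem_openSlots : newLowLen lo hi T r ∈ openSlots lo hi T r :=
  reflect_mem lowLen_mem_openSlots

theorem slot_mem_openSlots_iff (hc : ¬ IsPaired lo hi T c) :
    slot (lowLen lo T c.1.1) c.1.2 ∈ openSlots lo hi T c.1.1 ↔ (T c).2 = false := by
  rw [mem_openSlots, or_iff_right (slot_ne _ _)]
  refine ⟨fun ⟨d, ⟨hrow, _, hd⟩, hslot⟩ => ?_, fun h => ⟨c, ⟨rfl, hc, h⟩, rfl⟩⟩
  rwa [← Subtype.ext (Prod.ext hrow (slot_injective _ hslot))]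

theorem bkMap_of_isPaired (hc : IsPaired lo hi T c) :
    bkMap lo hi T c = ((T c).1, (T (partner lo hi T c)).2) :=
  if_pos hc

theorem bkMap_of_not_isPaired (hc : ¬ IsPaired lo hi T c) : bkMap lo hi T c =
    slotEntry lo hi (openSlots lo hi T c.1.1) (newLowLen lo hi T c.1.1) c.1.2 :=
  if_neg hc

theorem fst_bkMap_of_isPaired (hc : IsPaired lo hi T c) : (bkMap lo hi T c).1 = (T c).1 := by
  rw [bkMap_of_isPaired hc]

theorem fst_bkMap_of_not_isPaired (hc : ¬ IsPaired lo hi T c) : (bkMap lo hi T c).1 =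
    if c.1.2 < newLowLen lo hi T c.1.1 then lo else hi := by
  rw [bkMap_of_not_isPaired hc, slotEntry]

theorem fst_bkMap_mem_Icc (hlh : lo ⋖ hi) (hc : ¬ IsPaired lo hi T c) :
    (bkMap lo hi T c).1 ∈ Set.Icc lo hi := by
  rw [fst_bkMap_of_not_isPaired hc]
  split_ifs
  exacts [⟨le_rfl, hlh.le⟩, ⟨hlh.le, le_rfl⟩]

variable [LinearOrder β]

theorem IsTableau.openSlots_subset (hT : IsTableau T) (hD : IsLowerSet (D : Set (β × ℕ)))
    (hlh : lo ⋖ hi) : openSlots lo hi T r ⊆ Icc (freeStart lo hi T r) (freeEnd lo hi T r) := by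
  intro p hp
  rcases mem_openSlots.1 hp with rfl | ⟨c, ⟨rfl, hc, -⟩, rfl⟩
  · exact mem_Icc.2 ⟨freeStart_le_lowLen, lowLen_le_freeEnd⟩
  · exact slot_mem_Icc ((hT.not_isPaired_iff hD hlh c).1 hc)

theorem IsTableau.newLowLen_mem_Icc (hT : IsTableau T) (hD : IsLowerSet (D : Set (β × ℕ)))
    (hlh : lo ⋖ hi) (r : β) :
    newLowLen lo hi T r ∈ Icc (freeStart lo hi T r) (freeEnd lo hi T r) :=
  hT.openSlots_subset hD hlh newLowLen_mem_openSlots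

theorem IsTableau.eq_slotEntry (hT : IsTableau T) (hD : IsLowerSet (D : Set (β × ℕ)))
    (hlh : lo ⋖ hi) (hc : ¬ IsPaired lo hi T c) :
    T c = slotEntry lo hi (openSlots lo hi T c.1.1) (lowLen lo T c.1.1) c.1.2 := by
  simp only [slotEntry, slot_mem_openSlots_iff hc, hT.col_lt_lowLen_iff hD]
  refine Prod.ext ?_ (by simp)
  rcases fst_eq_or_eq_of_not_isPaired hc with h | h <;> simp [h, hlh.lt]

theorem IsTableau.openSlots_eq (hT : IsTableau T) (hD : IsLowerSet (D : Set (β × ℕ)))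
    (hlh : lo ⋖ hi) {U : Finset ℕ} (hU : U ⊆ Icc (freeStart lo hi T r) (freeEnd lo hi T r))
    (hlow : lowLen lo T r ∈ U)
    (hslot : ∀ c : D, c.1.1 = r → ¬ IsPaired lo hi T c →
      T c = slotEntry lo hi U (lowLen lo T r) c.1.2) :
    openSlots lo hi T r = U := by
  have hbar : ∀ c : D, c.1.1 = r → ¬ IsPaired lo hi T c →
      ((T c).2 = false ↔ slot (lowLen lo T r) c.1.2 ∈ U) := fun c hr hc => by
    simp [hslot c hr hc, slotEntry]
  ext p
  rw [mem_openSlots]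
  constructor
  · rintro (rfl | ⟨c, ⟨hr, hc, hT⟩, rfl⟩)
    exacts [hlow, (hbar c hr hc).1 hT]
  · refine fun hp => or_iff_not_imp_left.2 fun hne => ?_
    obtain ⟨j, hj, rfl⟩ := exists_slot_eq (hU hlow) (hU hp) hne
    obtain ⟨c, hc, hfree⟩ := hT.exists_not_isPaired hD hlh hj
    obtain ⟨rfl, rfl⟩ := Prod.ext_iff.1 hc
    exact ⟨c, ⟨rfl, hfree, (hbar c rfl hfree).2 hp⟩, rfl⟩

theorem IsTableau.fst_bkMap_le_iff (hT : IsTableau T) (hD : IsLowerSet (D : Set (β × ℕ)))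
    (hlh : lo ⋖ hi) (c : D) :
    (bkMap lo hi T c).1 ≤ lo ↔ c.1.2 < newLowLen lo hi T c.1.1 := by
  by_cases hc : IsPaired lo hi T c
  · obtain ⟨hstart, hend⟩ := mem_Icc.1 (hT.newLowLen_mem_Icc hD hlh c.1.1)
    rw [fst_bkMap_of_isPaired hc]
    constructor
    · exact fun h => ((hT.col_lt_freeStart_iff hD hlh c).2 ⟨h, hc⟩).trans_le hstart
    · exact fun h => ((hT.col_lt_freeEnd_iff hD hlh c).1 (h.trans_le hend)).resolve_right
        (not_not.2 hc)
  · rw [fst_bkMap_of_not_isPaired hc]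
    split_ifs with h <;> simp [h, hlh.lt]

theorem IsTableau.bkMap_row_le (hT : IsTableau T) (hD : IsLowerSet (D : Set (β × ℕ)))
    (hlh : lo ⋖ hi) {c d : D} (hrow : c.1.1 = d.1.1) (hcol : c.1.2 ≤ d.1.2) :
    (bkMap lo hi T c).1 ≤ (bkMap lo hi T d).1 := by
  by_cases hc : IsPaired lo hi T c <;> by_cases hd : IsPaired lo hi T d
  · rw [fst_bkMap_of_isPaired hc, fst_bkMap_of_isPaired hd]
    exact hT.row_le c d hrow hcol
  · have hlt := (mem_Ico.1 ((hT.not_isPaired_iff hD hlh d).1 hd)).2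
    have hclo := ((hT.col_lt_freeEnd_iff hD hlh c).1
      (hcol.trans_lt (hrow ▸ hlt))).resolve_right (not_not.2 hc)
    rw [fst_bkMap_of_isPaired hc]
    exact hclo.trans (fst_bkMap_mem_Icc hlh hd).1
  · have hle := (mem_Ico.1 ((hT.not_isPaired_iff hD hlh c).1 hc)).1
    have hdlo : ¬ (T d).1 ≤ lo := fun h =>
      ((hT.col_lt_freeStart_iff hD hlh d).2 ⟨h, hd⟩).not_ge (hrow ▸ hle.trans hcol)
    rw [fst_bkMap_of_isPaired hd]
    exact (fst_bkMap_mem_Icc hlh hc).2.trans (hlh.ge_of_gt (lt_of_not_ge hdlo))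
  · rw [fst_bkMap_of_not_isPaired hc, fst_bkMap_of_not_isPaired hd, hrow]
    split_ifs with h _ h'
    exacts [le_rfl, hlh.le, absurd (hcol.trans_lt h') h, le_rfl]

theorem IsTableau.isPaired_of_not_isPaired (hT : IsTableau T) (hlh : lo ⋖ hi) {d : D}
    (hc : ¬ IsPaired lo hi T c) (hcd : d.1.2 = c.1.2) (hne : d ≠ c) : IsPaired lo hi T d := by
  by_contra hd
  have hlo_hi := hlh.lt
  rcases hT.lt_or_lt_of_not_isPaired hlh hc hcd hne, fst_eq_or_eq_of_not_isPaired hd with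
    ⟨⟨-, h⟩ | ⟨-, h⟩, h' | h'⟩ <;> order

theorem IsTableau.bkMap_col_lt (hT : IsTableau T) (hlh : lo ⋖ hi) {c d : D}
    (hcol : c.1.2 = d.1.2) (hrow : c.1.1 < d.1.1) :
    (bkMap lo hi T c).1 < (bkMap lo hi T d).1 := by
  have hne : c ≠ d := fun h => hrow.ne (by rw [h])
  by_cases hc : IsPaired lo hi T c
  · rw [fst_bkMap_of_isPaired hc]
    by_cases hd : IsPaired lo hi T d
    · rw [fst_bkMap_of_isPaired hd]
      exact hT.col_lt c d hcol hrow
    · have hlt := (hT.lt_or_lt_of_not_isPaired hlh hd hcol hne).resolve_right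
        fun h => h.1.not_gt hrow
      exact hlt.2.trans_le (fst_bkMap_mem_Icc hlh hd).1
  · have hd := hT.isPaired_of_not_isPaired hlh hc hcol.symm hne.symm
    have hlt := (hT.lt_or_lt_of_not_isPaired hlh hc hcol.symm hne.symm).resolve_left
      fun h => h.1.not_gt hrow
    rw [fst_bkMap_of_isPaired hd]
    exact (fst_bkMap_mem_Icc hlh hc).2.trans_lt hlt.2

theorem IsTableau.isTableau_bkMap (hT : IsTableau T) (hD : IsLowerSet (D : Set (β × ℕ)))
    (hlh : lo ⋖ hi) : IsTableau (bkMap lo hi T) where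
  row_le _ _ := hT.bkMap_row_le hD hlh
  col_lt _ _ := hT.bkMap_col_lt hlh

theorem IsTableau.isPaired_bkMap_iff (hT : IsTableau T) (hlh : lo ⋖ hi) (c : D) :
    IsPaired lo hi (bkMap lo hi T) c ↔ IsPaired lo hi T c := by
  constructor
  · contrapose
    rintro hc ⟨d, hcol, hval⟩
    have hc' : (bkMap lo hi T c).1 = lo ∨ (bkMap lo hi T c).1 = hi := by
      rw [fst_bkMap_of_not_isPaired hc]
      exact ite_eq_or_eq _ _ _
    have hne : d ≠ c := by
      rintro rfl
      rcases hc' with h | h <;> simp [h, hlh.lt.ne, hlh.lt.ne'] at hval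
    rw [fst_bkMap_of_isPaired (hT.isPaired_of_not_isPaired hlh hc hcol hne)] at hval
    have hlo_hi := hlh.lt
    rcases hT.lt_or_lt_of_not_isPaired hlh hc hcol hne, hc' with ⟨⟨-, h⟩ | ⟨-, h⟩, h' | h'⟩ <;>
      rw [h'] at hval <;>
      simp only [Equiv.swap_apply_left, Equiv.swap_apply_right] at hval <;> order
  · refine fun hc => ⟨partner lo hi T c, hc.col_partner, ?_⟩
    rw [fst_bkMap_of_isPaired hc, fst_bkMap_of_isPaired hc.isPaired_partner, hc.fst_partner]

theorem IsTableau.freeStart_bkMap (hT : IsTableau T) (hlh : lo ⋖ hi) (r : β) :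
    freeStart lo hi (bkMap lo hi T) r = freeStart lo hi T r := by
  unfold freeStart
  congr 1
  funext c
  rw [hT.isPaired_bkMap_iff hlh]
  exact propext (and_congr_left fun hc => by rw [fst_bkMap_of_isPaired hc])

theorem IsTableau.freeEnd_bkMap (hT : IsTableau T) (hlh : lo ⋖ hi) (r : β) :
    freeEnd lo hi (bkMap lo hi T) r = freeEnd lo hi T r := by
  unfold freeEnd
  congr 1
  funext c
  rw [hT.isPaired_bkMap_iff hlh]
  exact propext (or_congr_left' fun hc => by rw [fst_bkMap_of_isPaired (not_not.1 hc)])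

theorem IsTableau.lowLen_bkMap (hT : IsTableau T) (hD : IsLowerSet (D : Set (β × ℕ)))
    (hlh : lo ⋖ hi) (r : β) :
    lowLen lo (bkMap lo hi T) r = newLowLen lo hi T r := by
  refine eq_of_forall_lt_iff fun j => ?_
  rw [lowLen, (hT.isTableau_bkMap hD hlh).leftClosed_le.lt_rowLen_iff hD]
  constructor
  · rintro ⟨c, hc, hlo⟩
    rwa [hT.fst_bkMap_le_iff hD hlh, hc] at hlo
  · intro hj
    obtain ⟨c, hc, -⟩ := ((hT.leftClosed_le_or_not_isPaired hD hlh).lt_rowLen_iff hD).1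
      (hj.trans_le (mem_Icc.1 (hT.newLowLen_mem_Icc hD hlh r)).2)
    exact ⟨c, hc, (hT.fst_bkMap_le_iff hD hlh c).2 (by rwa [hc])⟩

theorem IsTableau.openSlots_bkMap (hT : IsTableau T) (hD : IsLowerSet (D : Set (β × ℕ)))
    (hlh : lo ⋖ hi) (r : β) :
    openSlots lo hi (bkMap lo hi T) r = openSlots lo hi T r := by
  apply (hT.isTableau_bkMap hD hlh).openSlots_eq hD hlh
  · rw [hT.freeStart_bkMap hlh, hT.freeEnd_bkMap hlh]
    exact hT.openSlots_subset hD hlh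
  · rw [hT.lowLen_bkMap hD hlh]
    exact newLowLen_mem_openSlots
  · rintro c rfl hc
    rw [hT.isPaired_bkMap_iff hlh] at hc
    rw [bkMap_of_not_isPaired hc, hT.lowLen_bkMap hD hlh]

theorem IsTableau.partner_bkMap (hT : IsTableau T) (hD : IsLowerSet (D : Set (β × ℕ)))
    (hlh : lo ⋖ hi) (hc : IsPaired lo hi T c) :
    partner lo hi (bkMap lo hi T) c = partner lo hi T c := by
  refine (hT.isTableau_bkMap hD hlh).partner_eq hc.col_partner ?_
  rw [fst_bkMap_of_isPaired hc, fst_bkMap_of_isPaired hc.isPaired_partner, hc.fst_partner]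

theorem IsTableau.bkMap_bkMap (hT : IsTableau T) (hD : IsLowerSet (D : Set (β × ℕ)))
    (hlh : lo ⋖ hi) :
    bkMap lo hi (bkMap lo hi T) = T := by
  funext c
  by_cases hc : IsPaired lo hi T c
  · rw [bkMap_of_isPaired ((hT.isPaired_bkMap_iff hlh c).2 hc), hT.partner_bkMap hD hlh hc,
      bkMap_of_isPaired hc, bkMap_of_isPaired hc.isPaired_partner, hT.partner_partner hc]
  · rw [bkMap_of_not_isPaired (mt (hT.isPaired_bkMap_iff hlh c).1 hc), newLowLen,
      hT.openSlots_bkMap hD hlh, hT.lowLen_bkMap hD hlh, newLowLen,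
      reflect_reflect lowLen_mem_openSlots, ← hT.eq_slotEntry hD hlh hc]

end Map

section Weight

variable {α β M : Type*} [LinearOrder α] [LinearOrder β] {D : Finset (β × ℕ)} {T : D → α × Bool}
  {lo hi : α} {x : α → M} {y : α → β → ℕ → M} {c : D}

theorem IsTableau.apply_swap_partner (hT : IsTableau T) (hD : IsLowerSet (D : Set (β × ℕ)))
    (hlh : lo ⋖ hi) (hy : ∀ r r' j, r ⋖ r' → y lo r j = y hi r' j) (hc : IsPaired lo hi T c) :
    y (Equiv.swap lo hi (T c).1) (partner lo hi T c).1.1 (partner lo hi T c).1.2 =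
      y (T c).1 c.1.1 c.1.2 := by
  have hval := hc.fst_partner
  have hcol := hc.col_partner
  by_cases hlo : (T c).1 = lo
  · rw [hlo, Equiv.swap_apply_left] at hval ⊢
    rw [hcol, hy _ _ _ (hT.row_covBy hD hlh hcol.symm hlo hval)]
  by_cases hhi : (T c).1 = hi
  · rw [hhi, Equiv.swap_apply_right] at hval ⊢
    rw [hcol, hy _ _ _ (hT.row_covBy hD hlh hcol hval hhi)]
  · have hfix := Equiv.swap_apply_of_ne_of_ne hlo hhi
    rw [hT.partner_eq rfl hfix.symm, hfix]

variable [CommMonoid M]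

theorem IsTableau.prod_entryWeight_bkMap_isPaired (hT : IsTableau T)
    (hD : IsLowerSet (D : Set (β × ℕ))) (hlh : lo ⋖ hi)
    (hy : ∀ r r' j, r ⋖ r' → y lo r j = y hi r' j) :
    ∏ c : D with IsPaired lo hi T c, entryWeight x y c.1.1 c.1.2 (bkMap lo hi T c) =
      ∏ c : D with IsPaired lo hi T c,
        entryWeight (x ∘ Equiv.swap lo hi) y c.1.1 c.1.2 (T c) := by
  have hmem : ∀ c : D, c ∈ ({c | IsPaired lo hi T c} : Finset D) ↔ IsPaired lo hi T c := by simp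
  refine prod_nbij' (partner lo hi T) (partner lo hi T)
    (fun c hc => (hmem _).2 ((hmem c).1 hc).isPaired_partner)
    (fun c hc => (hmem _).2 ((hmem c).1 hc).isPaired_partner)
    (fun c hc => hT.partner_partner ((hmem c).1 hc))
    (fun c hc => hT.partner_partner ((hmem c).1 hc)) fun c hc => ?_
  rw [hmem] at hc
  rw [bkMap_of_isPaired hc]
  simp only [entryWeight, Function.comp_apply, hc.fst_partner, Equiv.swap_apply_self,
    hT.apply_swap_partner hD hlh hy hc]

theorem IsTableau.prod_filter_not_isPaired_row (hT : IsTableau T)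
    (hD : IsLowerSet (D : Set (β × ℕ))) (hlh : lo ⋖ hi) (r : β) (f : ℕ → M) :
    ∏ c : D with ¬ IsPaired lo hi T c ∧ c.1.1 = r, f c.1.2 =
      ∏ j ∈ Ico (freeStart lo hi T r) (freeEnd lo hi T r), f j := by
  refine prod_bij (fun c _ => c.1.2) (fun c hc => ?_) (fun c hc d hd hcd => ?_)
    (fun j hj => ?_) fun _ _ => rfl
  · obtain ⟨hfree, rfl⟩ := (mem_filter.1 hc).2
    exact (hT.not_isPaired_iff hD hlh c).1 hfree
  · exact Subtype.ext (Prod.ext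
      ((mem_filter.1 hc).2.2.trans (mem_filter.1 hd).2.2.symm) hcd)
  · obtain ⟨c, hc, hfree⟩ := hT.exists_not_isPaired hD hlh hj
    exact ⟨c, by simp [hc, hfree], by rw [hc]⟩

theorem IsTableau.prod_entryWeight_bkMap_not_isPaired (hT : IsTableau T)
    (hD : IsLowerSet (D : Set (β × ℕ))) (hlh : lo ⋖ hi)
    (hy : ∀ r j, y hi r j = y lo r (j + 1)) :
    ∏ c : D with ¬ IsPaired lo hi T c, entryWeight x y c.1.1 c.1.2 (bkMap lo hi T c) =
      ∏ c : D with ¬ IsPaired lo hi T c,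
        entryWeight (x ∘ Equiv.swap lo hi) y c.1.1 c.1.2 (T c) := by
  have hmaps : ∀ c ∈ ({c | ¬ IsPaired lo hi T c} : Finset D),
      c.1.1 ∈ univ.image fun c : D => c.1.1 := fun c _ => mem_image_of_mem _ (mem_univ c)
  rw [← prod_fiberwise_of_maps_to hmaps, ← prod_fiberwise_of_maps_to hmaps]
  refine prod_congr rfl fun r _ => ?_
  rw [filter_filter]
  set U := openSlots lo hi T r
  calc ∏ c : D with ¬ IsPaired lo hi T c ∧ c.1.1 = r,
        entryWeight x y c.1.1 c.1.2 (bkMap lo hi T c)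
      = ∏ c : D with ¬ IsPaired lo hi T c ∧ c.1.1 = r,
          entryWeight x y r c.1.2 (slotEntry lo hi U (newLowLen lo hi T r) c.1.2) :=
        prod_congr rfl fun c hc => by
          obtain ⟨hfree, rfl⟩ := (mem_filter.1 hc).2
          rw [bkMap_of_not_isPaired hfree]
    _ = ∏ c : D with ¬ IsPaired lo hi T c ∧ c.1.1 = r,
          entryWeight (x ∘ Equiv.swap lo hi) y r c.1.2
            (slotEntry lo hi U (lowLen lo T r) c.1.2) := by
        rw [hT.prod_filter_not_isPaired_row hD hlh r fun j =>
            entryWeight x y r j (slotEntry lo hi U (newLowLen lo hi T r) j),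
          hT.prod_filter_not_isPaired_row hD hlh r fun j =>
            entryWeight (x ∘ Equiv.swap lo hi) y r j (slotEntry lo hi U (lowLen lo T r) j)]
        exact prod_entryWeight_slotEntry_reflect (hy r) (hT.openSlots_subset hD hlh)
          lowLen_mem_openSlots
    _ = ∏ c : D with ¬ IsPaired lo hi T c ∧ c.1.1 = r,
          entryWeight (x ∘ Equiv.swap lo hi) y c.1.1 c.1.2 (T c) :=
        prod_congr rfl fun c hc => by
          obtain ⟨hfree, rfl⟩ := (mem_filter.1 hc).2
          rw [← hT.eq_slotEntry hD hlh hfree]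

theorem IsTableau.prod_entryWeight_bkMap (hT : IsTableau T)
    (hD : IsLowerSet (D : Set (β × ℕ))) (hlh : lo ⋖ hi)
    (hy_row : ∀ r j, y hi r j = y lo r (j + 1))
    (hy_col : ∀ r r' j, r ⋖ r' → y lo r j = y hi r' j) :
    ∏ c : D, entryWeight x y c.1.1 c.1.2 (bkMap lo hi T c) =
      ∏ c : D, entryWeight (x ∘ Equiv.swap lo hi) y c.1.1 c.1.2 (T c) := by
  rw [← prod_filter_mul_prod_filter_not univ (IsPaired lo hi T),
    hT.prod_entryWeight_bkMap_isPaired hD hlh hy_col,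
    hT.prod_entryWeight_bkMap_not_isPaired hD hlh hy_row, prod_filter_mul_prod_filter_not]

end Weight

section Partition

variable {n : ℕ} {lam : Fin n → ℕ} {T : cells lam → Fin n × Bool} {lo hi : Fin n}

theorem mem_cells {c : Fin n × ℕ} : c ∈ cells lam ↔ c.2 < lam c.1 := by
  simp only [cells, mem_filter, mem_product, mem_univ, mem_range, true_and, and_iff_right_iff_imp]
  exact fun h => h.trans_le (le_sup (mem_univ c.1))

theorem isLowerSet_cells (h : IsPartition lam) : IsLowerSet (cells lam : Set (Fin n × ℕ)) := by
  intro c d hdc hc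
  rw [mem_coe, mem_cells] at hc ⊢
  exact (hdc.2.trans_lt hc).trans_le (h hdc.1)

theorem isBarred_iff_isTableau : IsBarred lam T ↔ IsTableau T :=
  ⟨fun h => ⟨h.1, h.2⟩, fun h => ⟨h.row_le, h.col_lt⟩⟩

theorem cT1_eq_prod_entryWeight {r : ℕ} (i : Fin r) : cT1 r i lam T =
    ∏ c : cells lam, entryWeight 1 (fun a r' j => X (i, ysub a (r', j))) c.1.1 c.1.2 (T c) := by
  simp only [cT1, prod_filter, entryWeight, Pi.one_apply]

theorem ofAdd_content1_eq_prod_entryWeight (k : Fin n) :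
    Multiplicative.ofAdd (content1 lam T k) = ∏ c : cells lam,
      entryWeight (Pi.mulSingle k (Multiplicative.ofAdd 1)) 1 c.1.1 c.1.2 (T c) := by
  rw [content1, card_filter, ofAdd_sum]
  refine prod_congr rfl fun c _ => ?_
  rcases T c with ⟨a, _ | _⟩ <;>
    simp [entryWeight, Pi.mulSingle_apply, apply_ite Multiplicative.ofAdd]

theorem cT1_bkMap (hlam : IsPartition lam) (hT : IsTableau T) (hlh : lo ⋖ hi) {r : ℕ}
    (i : Fin r) : cT1 r i lam (bkMap lo hi T) = cT1 r i lam T := by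
  have hsucc := hlh
  rw [Fin.covBy_iff, Nat.covBy_iff_add_one_eq] at hsucc
  rw [cT1_eq_prod_entryWeight, cT1_eq_prod_entryWeight,
    hT.prod_entryWeight_bkMap (isLowerSet_cells hlam) hlh, Pi.one_comp]
  · intro r' j
    simp only [ysub, ← hsucc]
    push_cast
    ring_nf
  · intro r' s' j hrs
    rw [Fin.covBy_iff, Nat.covBy_iff_add_one_eq] at hrs
    simp only [ysub, ← hsucc, ← hrs]
    push_cast
    ring_nf

theorem content1_bkMap (hlam : IsPartition lam) (hT : IsTableau T) (hlh : lo ⋖ hi) (k : Fin n) :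
    content1 lam (bkMap lo hi T) k = content1 lam T (Equiv.swap lo hi k) := by
  apply Multiplicative.ofAdd.injective
  rw [ofAdd_content1_eq_prod_entryWeight, ofAdd_content1_eq_prod_entryWeight,
    hT.prod_entryWeight_bkMap (isLowerSet_cells hlam) hlh (fun _ _ => rfl) fun _ _ _ _ => rfl]
  -- `Equiv.swap` decides equality classically in the general lemmas, by computation on `Fin n`.
  rw [Subsingleton.elim (fun a b : Fin n => Classical.propDecidable (a = b)) (instDecidableEqFin n),
    Pi.mulSingle_comp_equiv, Equiv.symm_swap]

end Partition

end BenderKnuth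

open BenderKnuth

/-- the Bender–Knuth-type involutions, Lemma 3.6: for each
`i ∈ {1,…,n-1}` (here 0-based: `i` and `i+1` with `i+1 < n`) there is an
involution `s_i` of the set `B_λ̄` of barred skew tableaux of shape `λ̄` which
preserves `c_T(y)` and permutes the unbarred content by the simple
transposition `σ_i`. -/
theorem bender_knuth_involution (n r : ℕ) (hn : 1 ≤ n) (hr : 1 ≤ r)
    (lam : Fin r → Fin n → ℕ) (hlam : ∀ i, IsPartition (lam i))
    (i : ℕ) (hi : i + 1 < n) :
    ∃ f : {T : (j : Fin r) → cells (lam j) → Fin n × Bool // IsBarredSkew lam T} →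
          {T : (j : Fin r) → cells (lam j) → Fin n × Bool // IsBarredSkew lam T},
      Function.Involutive f ∧
      ∀ T, cT lam (f T).1 = cT lam T.1 ∧
        contentT lam (f T).1
          = contentT lam T.1 ∘
              Equiv.swap (⟨i, Nat.lt_of_succ_lt hi⟩ : Fin n) ⟨i + 1, hi⟩ := by
  have hlh : (⟨i, Nat.lt_of_succ_lt hi⟩ : Fin n) ⋖ ⟨i + 1, hi⟩ := by simp [Fin.covBy_iff]
  generalize (⟨i, Nat.lt_of_succ_lt hi⟩ : Fin n) = lo, (⟨i + 1, hi⟩ : Fin n) = hi' at hlh ⊢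
  have hD := fun j => isLowerSet_cells (hlam j)
  have htab {T} (hT : IsBarredSkew lam T) (j : Fin r) : IsTableau (T j) :=
    isBarred_iff_isTableau.1 (hT j)
  have hinv {T} (hT : IsBarredSkew lam T) (j : Fin r) :
      bkMap lo hi' (bkMap lo hi' (T j)) = T j :=
    (htab hT j).bkMap_bkMap (hD j) hlh
  refine ⟨fun T => ⟨fun j => bkMap lo hi' (T.1 j), fun j => isBarred_iff_isTableau.2
    ((htab T.2 j).isTableau_bkMap (hD j) hlh)⟩, fun T => ?_, fun T => ⟨?_, ?_⟩⟩
  · exact Subtype.ext (funext (hinv T.2))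
  · exact prod_congr rfl fun j _ => cT1_bkMap (hlam j) (htab T.2 j) hlh j
  · ext k
    rw [Function.comp_apply]
    exact sum_congr rfl fun j _ => content1_bkMap (hlam j) (htab T.2 j) hlh k
end

section
/- Let r ≥ 1 and let λ̄ = (λ^{(1)},…,λ^{(r)}) be a sequence of partitions in P_n. Then the monomial expansion s_λ̄(x|y) = Σ_{T ∈ B_λ̄} x^{ω(T)} · c_T(y) holds, where x^{ω(T)} = x_1^{ω(T)_1}⋯x_n^{ω(T)_n} and the sum is over all barred skew tableaux of shape λ̄. -/
/-!
Expanding the factor `x_a + y_{a+c(a)-r(a)}` of every cell of a semistandard tableau amounts to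
choosing, independently for each cell, whether its entry is left unbarred (the `x` term) or barred
(the `y` term). Since bars play no role in the row and column conditions, the terms obtained are
indexed by the barred fillings of the diagram, and the product of the chosen terms is the weight
of the filling. A product over `i` of such sums is a sum over tuples of barred fillings, and these
are the barred skew tableaux.
-/

open Finset MvPolynomial

attribute [local instance] Classical.propDecidable

theorem sum_filter_prod_sum_eq_sum_filter_fst {ι α β R : Type*} [Fintype ι] [DecidableEq ι]
    [Fintype α] [Fintype β] [CommSemiring R] (P : (ι → α) → Prop) [DecidablePred P]
    (w : ι → α × β → R) :
    ∑ S with P S, ∏ c, ∑ b, w c (S c, b) =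
      ∑ T : ι → α × β with P (fun c => (T c).1), ∏ c, w c (T c) := by
  calc ∑ S with P S, ∏ c, ∑ b, w c (S c, b)
      = ∑ S with P S, ∑ b : ι → β, ∏ c, w c (S c, b c) := by
        simp only [prod_univ_sum, Fintype.piFinset_univ]
    _ = ∑ p ∈ univ.filter P ×ˢ (univ : Finset (ι → β)), ∏ c, w c (p.1 c, p.2 c) :=
        (sum_product' ..).symm
    _ = ∑ T : ι → α × β with P (fun c => (T c).1), ∏ c, w c (T c) :=
        sum_equiv (Equiv.arrowProdEquivProdArrow ι (fun _ => α) fun _ => β).symm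
          (by simp [Equiv.arrowProdEquivProdArrow]) fun _ _ => rfl

theorem prod_pow_card_fiber {ι κ M : Type*} [Fintype κ] [DecidableEq κ] [CommMonoid M]
    (s : Finset ι) (g : ι → κ) (f : κ → M) :
    ∏ k, f k ^ #{c ∈ s | g c = k} = ∏ c ∈ s, f (g c) := by
  simp only [← prod_const, prod_fiberwise']

section BarredFillings

variable {n r : ℕ}

theorem isBarred_iff_isSSYT_fst {lam : Fin n → ℕ} {T : cells lam → Fin n × Bool} :
    IsBarred lam T ↔ IsSSYT lam fun c => (T c).1 :=
  Iff.rfl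

theorem filter_isBarredSkew (lam : Fin r → Fin n → ℕ) :
    univ.filter (IsBarredSkew lam) =
      Fintype.piFinset fun i => univ.filter (IsBarred (lam i)) := by
  ext T
  simp only [IsBarredSkew, mem_filter_univ, Fintype.mem_piFinset]

/-- The factor contributed to the monomial of a barred filling of the `i`-th diagram by an entry
`a` (a value and its bar) in the cell `c`: the `y`-variable if `a` is barred, the `x`-variable
otherwise. -/
noncomputable def entryWeight (i : Fin r) (c : Fin n × ℕ) (a : Fin n × Bool) :
    MvPolynomial (Fin n ⊕ Fin r × ℤ) ℤ :=
  if a.2 = true then X (Sum.inr (i, ysub a.1 c)) else X (Sum.inl a.1)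

theorem sum_entryWeight (i : Fin r) (c : Fin n × ℕ) (a : Fin n) :
    ∑ b, entryWeight i c (a, b) = X (Sum.inl a) + X (Sum.inr (i, ysub a c)) := by
  simp [entryWeight, add_comm]

theorem factSchur_eq_sum_isBarred (i : Fin r) (lam : Fin n → ℕ) :
    factSchur n r i lam =
      ∑ T with IsBarred lam T, ∏ c : cells lam, entryWeight i c (T c) := by
  simp only [factSchur, ← sum_entryWeight, isBarred_iff_isSSYT_fst]
  exact sum_filter_prod_sum_eq_sum_filter_fst (IsSSYT lam) fun c : cells lam => entryWeight i c

theorem prod_pow_content1 {M : Type*} [CommMonoid M] (lam : Fin n → ℕ)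
    (T : cells lam → Fin n × Bool) (f : Fin n → M) :
    ∏ k, f k ^ content1 lam T k = ∏ c with (T c).2 = false, f (T c).1 := by
  have content1_eq (k : Fin n) :
      content1 lam T k = #{c ∈ {c | (T c).2 = false} | (T c).1 = k} := by
    simp only [content1, filter_filter, Prod.ext_iff, and_comm]
  simp only [content1_eq, prod_pow_card_fiber]

theorem prod_entryWeight (i : Fin r) (lam : Fin n → ℕ) (T : cells lam → Fin n × Bool) :
    ∏ c : cells lam, entryWeight i c (T c) =
      (∏ k, X (Sum.inl k) ^ content1 lam T k) * rename Sum.inr (cT1 r i lam T) := by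
  simp only [entryWeight, prod_ite, Bool.not_eq_true, prod_pow_content1, cT1, map_prod, rename_X,
    mul_comm]

theorem prod_prod_entryWeight (lam : Fin r → Fin n → ℕ)
    (T : (i : Fin r) → cells (lam i) → Fin n × Bool) :
    ∏ i, ∏ c : cells (lam i), entryWeight i c (T i c) =
      (∏ k, X (Sum.inl k) ^ contentT lam T k) * rename Sum.inr (cT lam T) := by
  simp only [prod_entryWeight, prod_mul_distrib, contentT, cT, map_prod, ← prod_pow_eq_pow_sum]
  rw [prod_comm]

end BarredFillings

theorem factorial_schur_monomial_expansion_general (n r : ℕ) (lam : Fin r → Fin n → ℕ) :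
    ∏ i, factSchur n r i (lam i)
      = ∑ T ∈ Finset.univ.filter
          (fun T : (i : Fin r) → cells (lam i) → Fin n × Bool => IsBarredSkew lam T),
        (∏ k : Fin n, (X (Sum.inl k) : MvPolynomial (Fin n ⊕ Fin r × ℤ) ℤ)
            ^ contentT lam T k)
          * rename Sum.inr (cT lam T) := by
  calc ∏ i, factSchur n r i (lam i)
      = ∏ i, ∑ T with IsBarred (lam i) T, ∏ c : cells (lam i), entryWeight i c (T c) := by
        simp only [factSchur_eq_sum_isBarred]
    _ = ∑ T with IsBarredSkew lam T, ∏ i, ∏ c : cells (lam i), entryWeight i c (T i c) := by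
        rw [prod_univ_sum, filter_isBarredSkew]
    _ = ∑ T with IsBarredSkew lam T,
          (∏ k, X (Sum.inl k) ^ contentT lam T k) * rename Sum.inr (cT lam T) := by
        simp only [prod_prod_entryWeight]

/-- the monomial expansion
`s_λ̄(x|y) = Σ_{T ∈ B_λ̄} x^{ω(T)} c_T(y)`. -/
theorem factorial_schur_monomial_expansion (n r : ℕ) (hn : 1 ≤ n) (hr : 1 ≤ r)
    (lam : Fin r → Fin n → ℕ) (hlam : ∀ i, IsPartition (lam i)) :
    ∏ i, factSchur n r i (lam i)
      = ∑ T ∈ Finset.univ.filter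
          (fun T : (i : Fin r) → cells (lam i) → Fin n × Bool => IsBarredSkew lam T),
        (∏ k : Fin n, (X (Sum.inl k) : MvPolynomial (Fin n ⊕ Fin r × ℤ) ℤ)
            ^ contentT lam T k)
          * rename Sum.inr (cT lam T) :=
  factorial_schur_monomial_expansion_general n r lam
end

section
/- Fix i and an infinite family of variables y^{(i)}. As λ varies over P_n, the factorial Schur polynomials s_λ(x|y^{(i)}) form a ℤ[y]-basis of ℤ[x,y]^{S_n}, the ring of polynomials in the x and y variables which are symmetric in the x variables; in particular every element of ℤ[x,y]^{S_n} is uniquely a ℤ[y]-linear combination of the s_λ(x|y^{(i)}), λ ∈ P_n. -/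
open Finset MvPolynomial

attribute [local instance] Classical.propDecidable

/-!
Keep every entry of a tableau other than two consecutive letters, and sum over the ways of
distributing these two over the cells they occupy. A column holding both letters contributes a
factor symmetric in their variables, since the shift in content compensates the shift of the
letter; the remaining cells form, in each row, a one-row sum whose symmetry is a telescoping
identity. Hence factorial Schur polynomials are symmetric in `x`.

In the lexicographic order the leading monomial of `s_λ(x|y)` is `x^λ`, with coefficient `1`: in a
semistandard tableau an entry is at least its row index, and the filling of every cell with its
row index is the only tableau in which equality always holds. Leading monomials of symmetric
polynomials are exactly the `x^λ` with `λ` a partition, so unitriangularity gives the basis.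
-/

theorem mem_iff_lt_card_of_isLowerSet {s : Finset ℕ} (hs : IsLowerSet (s : Set ℕ)) {c : ℕ} :
    c ∈ s ↔ c < #s := by
  constructor
  · intro hc
    have hsub : range (c + 1) ⊆ s := fun d hd => hs (Nat.lt_succ_iff.1 (mem_range.1 hd)) hc
    simpa using card_le_card hsub
  · contrapose!
    intro hc
    have hsub : s ⊆ range c := fun d hd => mem_range.2 (not_le.1 fun h => hc (hs h hd))
    simpa using card_le_card hsub

section TwoLetterRow

variable {A : Type*} [CommRing A]

/-- The weight of a row segment in the columns `[p, q)` filled with a letter of variable `u` in the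
columns before `k` and with the next letter, of variable `v`, from column `k` on. The parameter
of a cell is indexed by letter plus column, hence the shift by one for the second letter. -/
def twoLetterRowWeight (u v : A) (z : ℕ → A) (p q k : ℕ) : A :=
  (∏ c ∈ Ico p k, (u + z c)) * ∏ c ∈ Ico k q, (v + z (c + 1))

/-- The generating function of all fillings of a row segment in the columns `[p, q)` by two
consecutive letters. -/
def twoLetterRowSum (u v : A) (z : ℕ → A) (p q : ℕ) : A :=
  ∑ k ∈ Icc p q, twoLetterRowWeight u v z p q k

theorem twoLetterRowSum_self (u v : A) (z : ℕ → A) (p : ℕ) : twoLetterRowSum u v z p p = 1 := by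
  simp [twoLetterRowSum, twoLetterRowWeight]

theorem twoLetterRowSum_succ (u v : A) (z : ℕ → A) {p q : ℕ} (hpq : p ≤ q) :
    twoLetterRowSum u v z p (q + 1) =
      twoLetterRowSum u v z p q * (v + z (q + 1)) + ∏ c ∈ Ico p (q + 1), (u + z c) := by
  rw [twoLetterRowSum, sum_Icc_succ_top (by lia), twoLetterRowSum, sum_mul]
  congr 1
  · refine sum_congr rfl fun k hk => ?_
    rw [twoLetterRowWeight, twoLetterRowWeight, prod_Ico_succ_top (mem_Icc.1 hk).2, mul_assoc]
  · simp [twoLetterRowWeight]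

theorem sub_mul_twoLetterRowSum (u v : A) (z : ℕ → A) {p q : ℕ} (hpq : p ≤ q) :
    (u - v) * twoLetterRowSum u v z p q =
      ∏ c ∈ Ico p (q + 1), (u + z c) - ∏ c ∈ Ico p (q + 1), (v + z c) := by
  induction q, hpq using Nat.le_induction with
  | base => simp [twoLetterRowSum_self]
  | succ q hpq ih =>
    rw [twoLetterRowSum_succ u v z hpq, prod_Ico_succ_top (b := q + 1) (by lia),
      prod_Ico_succ_top (b := q + 1) (by lia)]
    linear_combination (v + z (q + 1)) * ih

theorem twoLetterRowSum_comm (u v : A) (z : ℕ → A) (p q : ℕ) :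
    twoLetterRowSum u v z p q = twoLetterRowSum v u z p q := by
  rcases lt_or_ge q p with hqp | hpq
  · simp [twoLetterRowSum, Icc_eq_empty_of_lt hqp]
  induction q, hpq using Nat.le_induction with
  | base => simp [twoLetterRowSum_self]
  | succ q hpq ih =>
    rw [twoLetterRowSum_succ u v z hpq, twoLetterRowSum_succ v u z hpq]
    linear_combination (u + z (q + 1)) * ih - sub_mul_twoLetterRowSum u v z hpq

theorem sum_twoLetterRowWeight (u v : A) (z : ℕ → A) {p q l h : ℕ} (hpl : p ≤ l) (hhq : h ≤ q) :
    ∑ k ∈ Icc l h, twoLetterRowWeight u v z p q k =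
      twoLetterRowSum u v z l h *
        ((∏ c ∈ Ico p l, (u + z c)) * ∏ c ∈ Ico h q, (v + z (c + 1))) := by
  rw [twoLetterRowSum, sum_mul]
  refine sum_congr rfl fun k hk => ?_
  obtain ⟨hlk, hkh⟩ := mem_Icc.1 hk
  rw [twoLetterRowWeight, twoLetterRowWeight, ← prod_Ico_consecutive _ hpl hlk,
    ← prod_Ico_consecutive _ hkh hhq]
  ring

end TwoLetterRow

section TwoLetterStrip

variable {A : Type*} [CommRing A] (inner outer : ℕ → ℕ)

/-- The least column at which the second of two consecutive letters may start in row `r` of the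
skew diagram `outer / inner`: every cell lying above another cell must hold the first letter. -/
def stripLower (r : ℕ) : ℕ := max (inner r) (outer (r + 1))

/-- The greatest column at which the second of two consecutive letters may start in row `r` of the
skew diagram `outer / inner`: every cell lying below another cell must hold the second letter. -/
def stripUpper : ℕ → ℕ
  | 0 => outer 0
  | r + 1 => min (outer (r + 1)) (inner r)

/-- The generating function of all semistandard fillings of the skew diagram `outer / inner` with
`n` rows by two consecutive letters, of variables `u` and `v`. The first letter contributes
`u + y (s + c - r)` in row `r` and column `c`. -/
def twoLetterStripSum (u v : A) (y : ℤ → A) (s : ℤ) (n : ℕ) : A :=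
  ∏ r ∈ range n, ∑ k ∈ Icc (stripLower inner outer r) (stripUpper inner outer r),
    twoLetterRowWeight u v (fun c => y (s + c - r)) (inner r) (outer r) k

/-- The ways of choosing, in each of the `n` rows of the skew diagram `outer / inner`, the column at
which the second letter starts so that the filling is semistandard. -/
def stripSplits (n : ℕ) : Finset (Fin n → ℕ) :=
  Fintype.piFinset fun r : Fin n => Icc (stripLower inner outer r) (stripUpper inner outer r)

theorem mem_stripSplits {n : ℕ} {k : Fin n → ℕ} :
    k ∈ stripSplits inner outer n ↔
      ∀ r : Fin n, k r ∈ Icc (stripLower inner outer r) (stripUpper inner outer r) :=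
  Fintype.mem_piFinset

theorem twoLetterStripSum_eq_sum_stripSplits (u v : A) (y : ℤ → A) (s : ℤ) (n : ℕ) :
    twoLetterStripSum inner outer u v y s n =
      ∑ k ∈ stripSplits inner outer n, ∏ r : Fin n,
        twoLetterRowWeight u v (fun c => y (s + c - r)) (inner r) (outer r) (k r) := by
  rw [twoLetterStripSum, ← Fin.prod_univ_eq_prod_range, prod_univ_sum, stripSplits]

theorem le_stripLower (r : ℕ) : inner r ≤ stripLower inner outer r := le_max_left _ _

theorem stripUpper_le (r : ℕ) : stripUpper inner outer r ≤ outer r := by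
  cases r with
  | zero => exact le_rfl
  | succ r => exact min_le_left _ _

theorem Ico_stripLower (r : ℕ) :
    Ico (inner r) (stripLower inner outer r) = Ico (inner r) (outer (r + 1)) := by
  ext c
  simp only [stripLower, mem_Ico]
  lia

theorem Ico_stripUpper_succ (r : ℕ) :
    Ico (stripUpper inner outer (r + 1)) (outer (r + 1)) = Ico (inner r) (outer (r + 1)) := by
  ext c
  simp only [stripUpper, mem_Ico]
  lia

theorem prod_Ico_stripUpper (v : A) (y : ℤ → A) (s : ℤ) {n : ℕ} (hn : outer n = 0) :
    ∏ r ∈ range n, ∏ c ∈ Ico (stripUpper inner outer r) (outer r),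
        (v + y (s + (c + 1 : ℕ) - r)) =
      ∏ r ∈ range n, ∏ c ∈ Ico (inner r) (outer (r + 1)), (v + y (s + c - r)) := by
  set f : ℕ → A := fun r => ∏ c ∈ Ico (stripUpper inner outer r) (outer r),
    (v + y (s + (c + 1 : ℕ) - r)) with hf
  have hf_zero : f 0 = 1 := by simp [hf, stripUpper]
  have hf_last : f n = 1 := by simp [hf, hn]
  calc ∏ r ∈ range n, f r
      = ∏ r ∈ range (n + 1), f r := by rw [prod_range_succ, hf_last, mul_one]
    _ = ∏ r ∈ range n, f (r + 1) := by rw [prod_range_succ', hf_zero, mul_one]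
    _ = _ := prod_congr rfl fun r _ => by
      simp only [hf, Ico_stripUpper_succ]
      refine prod_congr rfl fun c _ => ?_
      congr 2
      push_cast
      ring

theorem twoLetterStripSum_eq (u v : A) (y : ℤ → A) (s : ℤ) {n : ℕ} (hn : outer n = 0) :
    twoLetterStripSum inner outer u v y s n =
      (∏ r ∈ range n, twoLetterRowSum u v (fun c => y (s + c - r))
        (stripLower inner outer r) (stripUpper inner outer r)) *
      ((∏ r ∈ range n, ∏ c ∈ Ico (inner r) (outer (r + 1)), (u + y (s + c - r))) *
        ∏ r ∈ range n, ∏ c ∈ Ico (inner r) (outer (r + 1)), (v + y (s + c - r))) := by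
  simp only [twoLetterStripSum, sum_twoLetterRowWeight u v _ (le_stripLower inner outer _)
    (stripUpper_le inner outer _), prod_mul_distrib, Ico_stripLower,
    prod_Ico_stripUpper inner outer v y s hn]

theorem twoLetterStripSum_comm (u v : A) (y : ℤ → A) (s : ℤ) {n : ℕ} (hn : outer n = 0) :
    twoLetterStripSum inner outer u v y s n = twoLetterStripSum inner outer v u y s n := by
  simp only [twoLetterStripSum_eq inner outer _ _ y s hn, twoLetterRowSum_comm u v]
  ring

end TwoLetterStrip

section Cells

variable {n : ℕ} {lam : Fin n → ℕ}

theorem mem_cells {c : Fin n × ℕ} : c ∈ cells lam ↔ c.2 < lam c.1 := by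
  simp only [cells, mem_filter, mem_product, mem_univ, true_and, mem_range,
    and_iff_right_iff_imp]
  exact fun h => h.trans_le (le_sup (f := lam) (mem_univ _))

theorem snd_lt (c : cells lam) : c.1.2 < lam c.1.1 := mem_cells.1 c.2

@[to_additive]
theorem prod_cells {M : Type*} [CommMonoid M] (lam : Fin n → ℕ) (f : Fin n × ℕ → M) :
    ∏ c : cells lam, f c = ∏ r : Fin n, ∏ c ∈ range (lam r), f (r, c) := by
  rw [prod_coe_sort (cells lam) f]
  exact prod_finset_product _ univ (fun r => range (lam r)) (by simp [mem_cells])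

end Cells

section Tableau

variable {n : ℕ} {lam : Fin n → ℕ} {T : cells lam → Fin n}

theorem IsSSYT.val_add_row_le (hT : IsSSYT lam T) (hlam : IsPartition lam) (c d : cells lam)
    (hcol : c.1.2 = d.1.2) (hrow : c.1.1 ≤ d.1.1) :
    (T c : ℕ) + d.1.1 ≤ T d + c.1.1 := by
  obtain ⟨⟨⟨i, hi⟩, j⟩, hc⟩ := c
  obtain ⟨⟨⟨k, hk⟩, j'⟩, hd⟩ := d
  obtain rfl : j = j' := hcol
  replace hrow : i ≤ k := hrow
  induction k, hrow using Nat.le_induction with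
  | base => exact le_rfl
  | succ k _ ih =>
    have he : ((⟨k, by lia⟩ : Fin n), j) ∈ cells lam :=
      mem_cells.2 ((mem_cells.1 hd).trans_le (hlam (Nat.le_succ k)))
    have hlt : (T ⟨_, he⟩ : ℕ) < T ⟨_, hd⟩ := hT.2 _ _ rfl (Nat.lt_succ_self k)
    have hle := ih (by lia) he
    simp only at hle ⊢
    lia

theorem IsSSYT.row_le (hT : IsSSYT lam T) (hlam : IsPartition lam) (c : cells lam) :
    c.1.1 ≤ T c := by
  have htop : ((⟨0, c.1.1.pos⟩ : Fin n), c.1.2) ∈ cells lam :=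
    mem_cells.2 ((snd_lt c).trans_le (hlam (Nat.zero_le _)))
  have hle := hT.val_add_row_le hlam ⟨_, htop⟩ c rfl (Nat.zero_le _)
  rw [Fin.le_def]
  simp only at hle
  lia

/-- The columns of the cells in row `r` of a tableau whose entry is less than `j`. -/
noncomputable def subshapeColumns (T : cells lam → Fin n) (j r : ℕ) : Finset ℕ :=
  ({c : cells lam | (c.1.1 : ℕ) = r ∧ (T c : ℕ) < j} : Finset (cells lam)).image fun c => c.1.2

/-- The shape of the subtableau formed by the entries less than `j`; for varying `j` these are the
rows of the Gelfand-Tsetlin pattern of the tableau. Rows are numbered by `ℕ`, those from `n` on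
being empty. -/
noncomputable def subshape (T : cells lam → Fin n) (j r : ℕ) : ℕ := #(subshapeColumns T j r)

theorem mem_subshapeColumns {j r c : ℕ} :
    c ∈ subshapeColumns T j r ↔
      ∃ d : cells lam, ((d.1.1 : ℕ) = r ∧ (T d : ℕ) < j) ∧ d.1.2 = c := by
  simp only [subshapeColumns, mem_image, mem_filter, mem_univ, true_and]

theorem snd_mem_subshapeColumns {j : ℕ} {c : cells lam} :
    c.1.2 ∈ subshapeColumns T j c.1.1 ↔ (T c : ℕ) < j := by
  refine mem_subshapeColumns.trans ⟨?_, fun h => ⟨c, ⟨rfl, h⟩, rfl⟩⟩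
  rintro ⟨d, ⟨hrow, hd⟩, hcol⟩
  rwa [← Subtype.ext (Prod.ext (Fin.ext hrow) hcol : d.1 = c.1)]

theorem IsSSYT.isLowerSet_subshapeColumns (hT : IsSSYT lam T) (j r : ℕ) :
    IsLowerSet (subshapeColumns T j r : Set ℕ) := by
  intro d c hcd hd
  obtain ⟨e, ⟨hrow, he⟩, rfl⟩ := mem_subshapeColumns.1 hd
  have hc : (e.1.1, c) ∈ cells lam := mem_cells.2 (hcd.trans_lt (snd_lt e))
  have hle : T ⟨_, hc⟩ ≤ T e := hT.1 _ _ rfl hcd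
  exact mem_subshapeColumns.2 ⟨⟨_, hc⟩, ⟨hrow, (Fin.le_def.1 hle).trans_lt he⟩, rfl⟩

theorem IsSSYT.lt_subshape_iff (hT : IsSSYT lam T) {j : ℕ} {c : cells lam} :
    c.1.2 < subshape T j c.1.1 ↔ (T c : ℕ) < j := by
  rw [subshape, ← mem_iff_lt_card_of_isLowerSet (hT.isLowerSet_subshapeColumns j c.1.1),
    snd_mem_subshapeColumns]

theorem subshape_congr {T' : cells lam → Fin n} {j : ℕ}
    (h : ∀ c, (T c : ℕ) < j ↔ (T' c : ℕ) < j) : subshape T j = subshape T' j := by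
  funext r
  simp only [subshape, subshapeColumns, h]

theorem subshape_mono {i j : ℕ} (hij : i ≤ j) (r : ℕ) : subshape T i r ≤ subshape T j r := by
  refine card_le_card fun c hc => ?_
  obtain ⟨d, ⟨hrow, hd⟩, hcol⟩ := mem_subshapeColumns.1 hc
  exact mem_subshapeColumns.2 ⟨d, ⟨hrow, hd.trans_le hij⟩, hcol⟩

theorem subshape_le (j : ℕ) (r : Fin n) : subshape T j r ≤ lam r := by
  have hsub : subshapeColumns T j r ⊆ range (lam r) := fun c hc => by
    obtain ⟨d, ⟨hrow, -⟩, rfl⟩ := mem_subshapeColumns.1 hc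
    exact mem_range.2 (Fin.ext hrow ▸ snd_lt d)
  exact (card_le_card hsub).trans_eq (card_range _)

theorem subshape_eq_zero {j r : ℕ} (hr : n ≤ r) : subshape T j r = 0 := by
  refine card_eq_zero.2 (eq_empty_of_forall_notMem fun c hc => ?_)
  obtain ⟨d, ⟨hrow, -⟩, -⟩ := mem_subshapeColumns.1 hc
  exact (hrow ▸ d.1.1.2).not_ge hr

theorem subshape_eq_of_forall {j k : ℕ} {r : Fin n} (hk : k ≤ lam r)
    (h : ∀ c : cells lam, c.1.1 = r → ((T c : ℕ) < j ↔ c.1.2 < k)) : subshape T j r = k := by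
  suffices hcols : subshapeColumns T j r = range k by rw [subshape, hcols, card_range]
  ext c
  rw [mem_subshapeColumns, mem_range]
  constructor
  · rintro ⟨d, ⟨hrow, hd⟩, rfl⟩
    exact (h d (Fin.ext hrow)).1 hd
  · intro hc
    exact ⟨⟨(r, c), mem_cells.2 (hc.trans_le hk)⟩, ⟨rfl, (h _ rfl).2 hc⟩, rfl⟩

theorem IsSSYT.subshape_succ_le (hT : IsSSYT lam T) (hlam : IsPartition lam) (j r : ℕ) :
    subshape T (j + 1) (r + 1) ≤ subshape T j r := by
  refine card_le_card fun c hc => ?_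
  obtain ⟨⟨⟨⟨i, hi⟩, _⟩, hd⟩, ⟨hrow, hlt⟩, rfl⟩ := mem_subshapeColumns.1 hc
  obtain rfl : i = r + 1 := hrow
  have habove : ((⟨r, by lia⟩ : Fin n), _) ∈ cells lam :=
    mem_cells.2 ((mem_cells.1 hd).trans_le (hlam (Nat.le_succ r)))
  have hcol : T ⟨_, habove⟩ < T ⟨_, hd⟩ := hT.2 _ _ rfl (Nat.lt_succ_self r)
  exact mem_subshapeColumns.2
    ⟨⟨_, habove⟩, ⟨rfl, (Fin.lt_def.1 hcol).trans_le (Nat.lt_succ_iff.1 hlt)⟩, rfl⟩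

theorem IsSSYT.subshape_mem_Icc (hT : IsSSYT lam T) (hlam : IsPartition lam) (j r : ℕ) :
    subshape T (j + 1) r ∈ Icc (stripLower (subshape T j) (subshape T (j + 2)) r)
      (stripUpper (subshape T j) (subshape T (j + 2)) r) := by
  refine mem_Icc.2 ⟨max_le (subshape_mono j.le_succ r) (hT.subshape_succ_le hlam (j + 1) r), ?_⟩
  cases r with
  | zero => exact subshape_mono (j + 1).le_succ 0
  | succ r => exact le_min (subshape_mono (j + 1).le_succ _) (hT.subshape_succ_le hlam j r)

end Tableau

section TableauWeight

variable {n : ℕ} {A : Type*} [CommRing A] {lam : Fin n → ℕ}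

/-- The contribution of the tableau `T` to the factorial Schur polynomial, evaluated at arbitrary
elements `x` and `y` of a commutative ring. -/
noncomputable def tableauWeight (x : Fin n → A) (y : ℤ → A) (T : cells lam → Fin n) : A :=
  ∏ c : cells lam, (x (T c) + y (ysub (T c) c))

/-- The value of the factorial Schur polynomial at elements `x` and `y` of a commutative ring. -/
noncomputable def factorialSchur (x : Fin n → A) (y : ℤ → A) (lam : Fin n → ℕ) : A :=
  ∑ T : cells lam → Fin n with IsSSYT lam T, tableauWeight x y T

end TableauWeight

section AdjacentLetters

variable {n : ℕ} {A : Type*} [CommRing A] {lam : Fin n → ℕ} {a b : Fin n}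
  {T T' : cells lam → Fin n} {k : Fin n → ℕ}

/-- Replaces every entry `b` by `a`. The fibers are the classes of fillings differing only in the
distribution of the letters `a` and `b` over the cells holding one of them. -/
def mergeLetters (a b : Fin n) (T : cells lam → Fin n) : cells lam → Fin n :=
  fun c => if T c = b then a else T c

/-- Redistributes the letters `a` and `b` over the cells of `T` holding one of them: in row `r`, the
letter `b` starts at column `k r`. -/
def refill (a b : Fin n) (T : cells lam → Fin n) (k : Fin n → ℕ) : cells lam → Fin n :=
  fun c => if T c = a ∨ T c = b then if c.1.2 < k c.1.1 then a else b else T c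

theorem mergeLetters_eq_iff :
    mergeLetters a b T = mergeLetters a b T' ↔
      ∀ c, T c = T' c ∨ (T c = a ∨ T c = b) ∧ (T' c = a ∨ T' c = b) := by
  refine funext_iff.trans (forall_congr' fun c => ?_)
  simp only [mergeLetters]
  grind

theorem mergeLetters_refill : mergeLetters a b (refill a b T k) = mergeLetters a b T := by
  refine mergeLetters_eq_iff.2 fun c => ?_
  simp only [refill]
  grind

theorem subshape_eq_of_mergeLetters_eq (h : mergeLetters a b T' = mergeLetters a b T) {j : ℕ}
    (hj : (a : ℕ) < j ↔ (b : ℕ) < j) : subshape T' j = subshape T j := by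
  refine subshape_congr fun c => ?_
  obtain heq | ⟨rfl | rfl, h' | h'⟩ := mergeLetters_eq_iff.1 h c
  · rw [heq]
  all_goals simp only [h', hj]

theorem IsSSYT.mem_strip_iff (hT : IsSSYT lam T) (hab : (b : ℕ) = a + 1) {c : cells lam} :
    T c = a ∨ T c = b ↔ c.1.2 ∈ Ico (subshape T a c.1.1) (subshape T (a + 2) c.1.1) := by
  rw [mem_Ico, ← not_lt, hT.lt_subshape_iff, hT.lt_subshape_iff, Fin.ext_iff, Fin.ext_iff]
  lia

theorem isSSYT_refill (hT : IsSSYT lam T) (hlam : IsPartition lam) (hab : (b : ℕ) = a + 1)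
    (hk : k ∈ stripSplits (subshape T a) (subshape T (a + 2)) n) :
    IsSSYT lam (refill a b T k) := by
  constructor
  · intro c d hrow hcol
    have hle := hT.1 c d hrow hcol
    simp only [refill, ← hrow]
    grind
  · intro c d hcol hrow
    have hlt := hT.2 c d hcol hrow
    by_cases hboth : T c = a ∧ T d = b
    · have hadj : (d.1.1 : ℕ) = c.1.1 + 1 := by
        have := hT.val_add_row_le hlam c d hcol hrow.le
        grind
      have hc : c.1.2 < k c.1.1 := by
        have hd := (mem_Ico.1 ((hT.mem_strip_iff hab).1 (Or.inr hboth.2))).2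
        rw [← hcol, hadj] at hd
        exact hd.trans_le ((le_max_right _ _).trans
          (mem_Icc.1 ((mem_stripSplits _ _).1 hk c.1.1)).1)
      have hd : k d.1.1 ≤ d.1.2 := by
        have hc' := (mem_Ico.1 ((hT.mem_strip_iff hab).1 (Or.inl hboth.1))).1
        have hkd := (mem_Icc.1 ((mem_stripSplits _ _).1 hk d.1.1)).2
        rw [hadj] at hkd
        exact hkd.trans ((min_le_right _ _).trans (hc'.trans_eq hcol))
      simp only [refill, hboth, hc, hd.not_gt]
      grind
    · simp only [refill]
      grind

theorem IsSSYT.subshape_refill (hT : IsSSYT lam T) (hab : (b : ℕ) = a + 1)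
    (hk : k ∈ stripSplits (subshape T a) (subshape T (a + 2)) n) (r : Fin n) :
    subshape (refill a b T k) (a + 1) r = k r := by
  obtain ⟨hlower, hupper⟩ := mem_Icc.1 ((mem_stripSplits _ _).1 hk r)
  replace hlower := (le_stripLower _ _ _).trans hlower
  replace hupper := hupper.trans (stripUpper_le _ _ _)
  refine subshape_eq_of_forall (hupper.trans (subshape_le _ r)) ?_
  rintro c rfl
  have hinner := hT.lt_subshape_iff (j := a) (c := c)
  have houter := hT.lt_subshape_iff (j := a + 2) (c := c)
  simp only [refill]
  grind

theorem IsSSYT.refill_subshape (hT' : IsSSYT lam T') (hab : (b : ℕ) = a + 1)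
    (h : mergeLetters a b T' = mergeLetters a b T) :
    refill a b T (fun r => subshape T' (a + 1) r) = T' := by
  funext c
  have hc := mergeLetters_eq_iff.1 h c
  simp only [refill, hT'.lt_subshape_iff]
  grind

theorem IsSSYT.prod_strip (hT : IsSSYT lam T) (hab : (b : ℕ) = a + 1) {M : Type*} [CommMonoid M]
    (f : Fin n × ℕ → M) :
    ∏ c : cells lam with T c = a ∨ T c = b, f c =
      ∏ r : Fin n, ∏ c ∈ Ico (subshape T a r) (subshape T (a + 2) r), f (r, c) := by
  simp only [prod_filter, hT.mem_strip_iff hab]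
  rw [prod_cells lam fun c => if c.2 ∈ Ico (subshape T a c.1) (subshape T (a + 2) c.1) then f c
    else 1]
  refine prod_congr rfl fun r _ => ?_
  rw [← prod_filter]
  refine prod_congr (Finset.ext fun c => ?_) fun _ _ => rfl
  rw [mem_filter, mem_range, and_iff_right_iff_imp]
  exact fun hc => (mem_Ico.1 hc).2.trans_le (subshape_le _ r)

theorem IsSSYT.tableauWeight_refill (hT : IsSSYT lam T) (hab : (b : ℕ) = a + 1)
    (hk : k ∈ stripSplits (subshape T a) (subshape T (a + 2)) n) (x : Fin n → A) (y : ℤ → A) :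
    tableauWeight x y (refill a b T k) =
      (∏ c : cells lam with ¬(T c = a ∨ T c = b), (x (T c) + y (ysub (T c) c))) *
        ∏ r : Fin n, twoLetterRowWeight (x a) (x b) (fun c => y (a + 1 + c - r))
          (subshape T a r) (subshape T (a + 2) r) (k r) := by
  rw [tableauWeight, ← prod_filter_not_mul_prod_filter univ fun c => T c = a ∨ T c = b]
  congr 1
  · refine prod_congr rfl fun c hc => ?_
    rw [refill, if_neg (mem_filter.1 hc).2]
  · set letter : Fin n × ℕ → Fin n := fun c => if c.2 < k c.1 then a else b
    calc ∏ c : cells lam with T c = a ∨ T c = b, _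
        = ∏ c : cells lam with T c = a ∨ T c = b, (x (letter c) + y (ysub (letter c) c)) :=
          prod_congr rfl fun c hc => by rw [refill, if_pos (mem_filter.1 hc).2]
      _ = _ := hT.prod_strip hab fun c => x (letter c) + y (ysub (letter c) c)
      _ = _ := prod_congr rfl fun r _ => ?_
    obtain ⟨hlower, hupper⟩ := mem_Icc.1 ((mem_stripSplits _ _).1 hk r)
    rw [twoLetterRowWeight, ← prod_Ico_consecutive _ ((le_stripLower _ _ _).trans hlower)
      (hupper.trans (stripUpper_le _ _ _))]
    congr 1 <;> refine prod_congr rfl fun c hc => ?_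
    · simp only [letter, (mem_Ico.1 hc).2, if_true, ysub]
    · simp only [letter, (mem_Ico.1 hc).1.not_gt, if_false, ysub, hab]
      push_cast
      ring_nf

theorem IsSSYT.sum_mergeLetters_fiber (hT : IsSSYT lam T) (hlam : IsPartition lam)
    (hab : (b : ℕ) = a + 1) (x : Fin n → A) (y : ℤ → A) :
    ∑ T' : cells lam → Fin n with IsSSYT lam T' ∧ mergeLetters a b T' = mergeLetters a b T,
        tableauWeight x y T' =
      (∏ c : cells lam with ¬(T c = a ∨ T c = b), (x (T c) + y (ysub (T c) c))) *
        twoLetterStripSum (subshape T a) (subshape T (a + 2)) (x a) (x b) y (a + 1) n := by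
  rw [twoLetterStripSum_eq_sum_stripSplits, mul_sum]
  symm
  refine sum_nbij' (refill a b T) (fun T' r => subshape T' (a + 1) r)
    (fun k hk => mem_filter.2 ⟨mem_univ _, isSSYT_refill hT hlam hab hk, mergeLetters_refill⟩)
    (fun T' hT' => ?_) (fun k hk => funext (hT.subshape_refill hab hk))
    (fun T' hT' => ?_) (fun k hk => (hT.tableauWeight_refill hab hk x y).symm)
  all_goals obtain ⟨-, hT', hmerge⟩ := mem_filter.1 hT'
  · rw [← subshape_eq_of_mergeLetters_eq hmerge (j := a) (by lia),
      ← subshape_eq_of_mergeLetters_eq hmerge (j := a + 2) (by lia)]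
    exact (mem_stripSplits _ _).2 fun r => hT'.subshape_mem_Icc hlam a r
  · exact hT'.refill_subshape hab hmerge

theorem factorialSchur_comp_swap (hlam : IsPartition lam) (hab : (b : ℕ) = a + 1)
    (x : Fin n → A) (y : ℤ → A) :
    factorialSchur (x ∘ Equiv.swap a b) y lam = factorialSchur x y lam := by
  rw [factorialSchur, factorialSchur, ← sum_fiberwise _ (mergeLetters a b),
    ← sum_fiberwise (filter (IsSSYT lam) univ) (mergeLetters a b)]
  refine sum_congr rfl fun U _ => ?_
  simp only [filter_filter]
  by_cases hU : ∃ T, IsSSYT lam T ∧ mergeLetters a b T = U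
  · obtain ⟨T, hT, rfl⟩ := hU
    rw [hT.sum_mergeLetters_fiber hlam hab, hT.sum_mergeLetters_fiber hlam hab,
      twoLetterStripSum_comm _ _ _ _ _ _ (subshape_eq_zero le_rfl)]
    simp only [Function.comp_apply, Equiv.swap_apply_left, Equiv.swap_apply_right]
    congr 1
    refine prod_congr rfl fun c hc => ?_
    obtain ⟨hca, hcb⟩ := not_or.1 (mem_filter.1 hc).2
    rw [Equiv.swap_apply_of_ne_of_ne hca hcb]
  · rw [filter_eq_empty_iff.2 fun T _ hT => hU ⟨T, hT⟩, sum_empty, sum_empty]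

theorem factorialSchur_comp_perm (hlam : IsPartition lam) (σ : Equiv.Perm (Fin n))
    (x : Fin n → A) (y : ℤ → A) : factorialSchur (x ∘ σ) y lam = factorialSchur x y lam := by
  cases n with
  | zero => rw [Subsingleton.elim (x ∘ σ) x]
  | succ n =>
    have hσ : σ ∈ Submonoid.closure
        (Set.range fun i : Fin n => Equiv.swap i.castSucc i.succ) := by
      rw [Equiv.Perm.mclosure_swap_castSucc_succ]
      trivial
    induction hσ using Submonoid.closure_induction generalizing x with
    | mem τ hτ =>
      obtain ⟨i, rfl⟩ := hτ
      exact factorialSchur_comp_swap hlam (by simp) x y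
    | one => rfl
    | mul τ τ' _ _ ih ih' => rw [Equiv.Perm.coe_mul, ← Function.comp_assoc, ih', ih]

end AdjacentLetters

section LeadingTerms

open scoped MonomialOrder

theorem degree_and_leadingCoeff_sum_of_lt {σ ι R : Type*} [CommSemiring R] {m : MonomialOrder σ}
    {f : ι → MvPolynomial σ R} {s : Finset ι} {i : ι} (hi : i ∈ s)
    (h : ∀ j ∈ s, j ≠ i → m.degree (f j) ≺[m] m.degree (f i)) :
    m.degree (∑ j ∈ s, f j) = m.degree (f i) ∧
      m.leadingCoeff (∑ j ∈ s, f j) = m.leadingCoeff (f i) := by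
  rw [← add_sum_erase s f hi]
  rcases (s.erase i).eq_empty_or_nonempty with hs | ⟨j, hj⟩
  · rw [hs, sum_empty, add_zero]
    exact ⟨rfl, rfl⟩
  · have hlt : m.degree (∑ j ∈ s.erase i, f j) ≺[m] m.degree (f i) := by
      refine MonomialOrder.degree_sum_le.trans_lt ((Finset.sup_lt_iff (bot_le.trans_lt
        (h j (mem_of_mem_erase hj) (ne_of_mem_erase hj)))).2 fun k hk => ?_)
      exact h k (mem_of_mem_erase hk) (ne_of_mem_erase hk)
    exact ⟨MonomialOrder.degree_add_of_lt hlt, MonomialOrder.leadingCoeff_add_of_lt hlt⟩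

variable {σ ι R : Type*} [CommRing R] {m : MonomialOrder σ} {f : ι → MvPolynomial σ R}

theorem linearIndependent_of_monic_of_injective_degree (hf : ∀ i, m.Monic (f i))
    (hinj : Function.Injective fun i => m.degree (f i)) : LinearIndependent R f := by
  refine linearIndependent_iff.2 fun l hl => ?_
  by_contra hne
  obtain ⟨i, hi, hmax⟩ := exists_max_image l.support (fun i => m.toSyn (m.degree (f i)))
    (Finsupp.support_nonempty_iff.2 hne)
  have hcoeff : coeff (m.degree (f i)) (Finsupp.linearCombination R f l) = l i := by
    rw [Finsupp.linearCombination_apply, Finsupp.sum, coeff_sum, sum_eq_single_of_mem i hi]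
    · rw [coeff_smul, (hf i).coeff_degree, smul_eq_mul, mul_one]
    · intro j hj hji
      have hlt : m.degree (f j) ≺[m] m.degree (f i) :=
        (hmax j hj).lt_of_ne fun h => hji (hinj (m.toSyn.injective h))
      rw [coeff_smul, MonomialOrder.coeff_eq_zero_of_lt hlt, smul_zero]
  rw [hl, coeff_zero] at hcoeff
  exact Finsupp.mem_support_iff.1 hi hcoeff.symm

theorem degree_sub_smul_lt {p g : MvPolynomial σ R} (hg : m.Monic g)
    (hdeg : m.degree g = m.degree p) (hne : p - m.leadingCoeff p • g ≠ 0) :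
    m.degree (p - m.leadingCoeff p • g) ≺[m] m.degree p := by
  have hle : m.degree (p - m.leadingCoeff p • g) ≼[m] m.degree p :=
    MonomialOrder.degree_sub_le.trans
      (sup_le le_rfl (MonomialOrder.degree_smul_le.trans_eq (congrArg m.toSyn hdeg)))
  have hcoeff : coeff (m.degree p) (p - m.leadingCoeff p • g) = 0 := by
    rw [coeff_sub, coeff_smul, ← hdeg, hg.coeff_degree, hdeg, smul_eq_mul, mul_one]
    exact sub_self _
  refine hle.lt_of_ne fun h => hne ?_
  rwa [← m.toSyn.injective h, MonomialOrder.coeff_degree_eq_zero_iff] at hcoeff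

theorem span_range_eq_of_monic (N : Submodule R (MvPolynomial σ R)) (hfN : ∀ i, f i ∈ N)
    (hf : ∀ i, m.Monic (f i)) (hdeg : ∀ p ∈ N, ∃ i, m.degree (f i) = m.degree p) :
    Submodule.span R (Set.range f) = N := by
  refine le_antisymm (Submodule.span_le.2 (Set.range_subset_iff.2 hfN)) fun p hp => ?_
  induction hd : m.toSyn (m.degree p) using WellFoundedLT.induction generalizing p with
  | ind d ih =>
    obtain ⟨i, hi⟩ := hdeg p hp
    have hfi : m.leadingCoeff p • f i ∈ Submodule.span R (Set.range f) :=
      Submodule.smul_mem _ _ (Submodule.subset_span ⟨i, rfl⟩)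
    rw [← sub_add_cancel p (m.leadingCoeff p • f i)]
    refine Submodule.add_mem _ ?_ hfi
    rcases eq_or_ne (p - m.leadingCoeff p • f i) 0 with hzero | hne
    · rw [hzero]
      exact Submodule.zero_mem _
    · exact ih _ (hd ▸ degree_sub_smul_lt (hf i) hi hne) _
        (Submodule.sub_mem _ hp (Submodule.smul_mem _ _ (hfN i))) rfl

end LeadingTerms

section TableauContent

open scoped MonomialOrder

variable {n : ℕ} {lam : Fin n → ℕ} {T : cells lam → Fin n}

/-- The content of a filling, as the exponent of the monomial `x^T`. -/
noncomputable def tableauContent (T : cells lam → Fin n) : Fin n →₀ ℕ :=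
  ∑ c : cells lam, Finsupp.single (T c) 1

/-- The tableau of shape `lam` filling each cell with its row index, the only one of content
`lam`. -/
def highestWeightTableau (lam : Fin n → ℕ) (c : cells lam) : Fin n := c.1.1

theorem isSSYT_highestWeightTableau (lam : Fin n → ℕ) : IsSSYT lam (highestWeightTableau lam) :=
  ⟨fun _ _ hrow _ => hrow.le, fun _ _ _ hrow => hrow⟩

theorem tableauContent_highestWeightTableau (lam : Fin n → ℕ) :
    tableauContent (highestWeightTableau lam) = Finsupp.equivFunOnFinite.symm lam := by
  refine (sum_cells lam fun c => Finsupp.single c.1 1).trans ?_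
  simp only [sum_const, card_range, Finsupp.smul_single_one]
  exact Finsupp.univ_sum_single (Finsupp.equivFunOnFinite.symm lam)

theorem IsSSYT.tableauContent_lt (hT : IsSSYT lam T) (hlam : IsPartition lam)
    (hne : T ≠ highestWeightTableau lam) :
    tableauContent T ≺[MonomialOrder.lex] tableauContent (highestWeightTableau lam) := by
  obtain ⟨c, hc⟩ := Function.ne_iff.1 hne
  simp only [tableauContent, map_sum]
  exact sum_lt_sum (fun d _ => Finsupp.Lex.single_le_iff.2 (hT.row_le hlam d))
    ⟨c, mem_univ c, Finsupp.Lex.single_lt_iff.2 ((hT.row_le hlam c).lt_of_ne' hc)⟩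

end TableauContent

section FactorialSchurPolynomial

variable {n : ℕ} {R : Type*} [CommRing R] (y : ℤ → R) {lam : Fin n → ℕ}

theorem monic_tableauWeight (T : cells lam → Fin n) :
    MonomialOrder.lex.Monic (tableauWeight (X : Fin n → MvPolynomial (Fin n) R) (C ∘ y) T) :=
  MonomialOrder.Monic.prod fun _ _ => MonomialOrder.monic_X_add_C _ _ _

theorem degree_tableauWeight [Nontrivial R] (T : cells lam → Fin n) :
    MonomialOrder.lex.degree (tableauWeight (X : Fin n → MvPolynomial (Fin n) R) (C ∘ y) T) =
      tableauContent T := by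
  refine (MonomialOrder.degree_prod_of_regular fun c _ => ?_).trans
    (sum_congr rfl fun c _ => MonomialOrder.degree_X_add_C _ _ _)
  rw [Function.comp_apply, (MonomialOrder.monic_X_add_C _ _ _).leadingCoeff_eq_one]
  exact isRegular_one

/-- The factorial Schur polynomial as a polynomial in the `x`-variables, with coefficients in a ring
containing the parameters `y`. -/
noncomputable def factorialSchurPoly (y : ℤ → R) (lam : Fin n → ℕ) : MvPolynomial (Fin n) R :=
  factorialSchur X (C ∘ y) lam

theorem isSymmetric_factorialSchurPoly (hlam : IsPartition lam) :
    (factorialSchurPoly y lam).IsSymmetric := by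
  intro e
  calc rename e (factorialSchurPoly y lam) = factorialSchur (X ∘ e) (C ∘ y) lam := by
        simp only [factorialSchurPoly, factorialSchur, tableauWeight, map_sum, map_prod, map_add,
          rename_X, rename_C, Function.comp_apply]
    _ = factorialSchurPoly y lam := factorialSchur_comp_perm hlam e X (C ∘ y)

theorem degree_and_leadingCoeff_factorialSchurPoly [Nontrivial R] (hlam : IsPartition lam) :
    MonomialOrder.lex.degree (factorialSchurPoly y lam) = Finsupp.equivFunOnFinite.symm lam ∧
      MonomialOrder.lex.leadingCoeff (factorialSchurPoly y lam) = 1 := by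
  rw [← tableauContent_highestWeightTableau, ← degree_tableauWeight y,
    ← (monic_tableauWeight y (highestWeightTableau lam)).leadingCoeff_eq_one]
  refine degree_and_leadingCoeff_sum_of_lt
    (mem_filter.2 ⟨mem_univ _, isSSYT_highestWeightTableau lam⟩) fun T hT hne => ?_
  rw [degree_tableauWeight, degree_tableauWeight]
  exact (mem_filter.1 hT).2.tableauContent_lt hlam hne

theorem degree_factorialSchurPoly [Nontrivial R] (hlam : IsPartition lam) :
    MonomialOrder.lex.degree (factorialSchurPoly y lam) = Finsupp.equivFunOnFinite.symm lam :=
  (degree_and_leadingCoeff_factorialSchurPoly y hlam).1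

theorem monic_factorialSchurPoly [Nontrivial R] (hlam : IsPartition lam) :
    MonomialOrder.lex.Monic (factorialSchurPoly y lam) :=
  (degree_and_leadingCoeff_factorialSchurPoly y hlam).2

variable (n)

theorem linearIndependent_factorialSchurPoly [Nontrivial R] :
    LinearIndependent R
      fun lam : {l : Fin n → ℕ // IsPartition l} => factorialSchurPoly y lam.1 := by
  refine linearIndependent_of_monic_of_injective_degree (m := MonomialOrder.lex)
    (fun lam => monic_factorialSchurPoly y lam.2) fun lam mu h => ?_
  simp only [degree_factorialSchurPoly y (Subtype.prop _)] at h
  exact Subtype.ext (Finsupp.equivFunOnFinite.symm.injective h)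

theorem span_factorialSchurPoly [Nontrivial R] :
    Submodule.span R (Set.range
      fun lam : {l : Fin n → ℕ // IsPartition l} => factorialSchurPoly y lam.1) =
      Subalgebra.toSubmodule (symmetricSubalgebra (Fin n) R) :=
  span_range_eq_of_monic (m := MonomialOrder.lex) _
    (fun lam => isSymmetric_factorialSchurPoly y lam.2)
    (fun lam => monic_factorialSchurPoly y lam.2)
    fun p hp => by
      have hanti : IsPartition (MonomialOrder.lex.degree p) := IsSymmetric.antitone_supDegree hp
      refine ⟨⟨_, hanti⟩, (degree_factorialSchurPoly y hanti).trans ?_⟩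
      exact Finsupp.equivFunOnFinite.symm_apply_apply _

end FactorialSchurPolynomial

section Transport

variable {n r : ℕ} (i : Fin r)

theorem sumAlgEquiv_factSchur (lam : Fin n → ℕ) :
    sumAlgEquiv ℤ (Fin n) (Fin r × ℤ) (factSchur n r i lam) =
      factorialSchurPoly (fun k => X (i, k)) lam := by
  simp only [factSchur, factorialSchurPoly, factorialSchur, tableauWeight, map_sum, map_prod,
    map_add, sumAlgEquiv_X_inl, sumAlgEquiv_X_inr, Function.comp_apply]

theorem rename_sumAlgEquiv {R S₁ S₂ T₁ : Type*} [CommSemiring R] (e : S₁ → T₁)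
    (p : MvPolynomial (S₁ ⊕ S₂) R) :
    rename e (sumAlgEquiv R S₁ S₂ p) = sumAlgEquiv R T₁ S₂ (rename (Sum.map e id) p) := by
  have h : ((rename e).restrictScalars R).comp (sumAlgEquiv R S₁ S₂).toAlgHom =
      (sumAlgEquiv R T₁ S₂).toAlgHom.comp (rename (Sum.map e id)) := by
    apply MvPolynomial.algHom_ext
    rintro (j | j) <;> simp
  exact DFunLike.congr_fun h p

theorem sumAlgEquiv_sum_factSchur
    (c : {l : Fin n → ℕ // IsPartition l} →₀ MvPolynomial (Fin r × ℤ) ℤ) :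
    sumAlgEquiv ℤ (Fin n) (Fin r × ℤ)
        (c.sum fun lam q => rename Sum.inr q * factSchur n r i lam.1) =
      Finsupp.linearCombination _ (fun lam => factorialSchurPoly (fun k => X (i, k)) lam.1) c := by
  have hcoeff (q : MvPolynomial (Fin r × ℤ) ℤ) :
      sumAlgEquiv ℤ (Fin n) (Fin r × ℤ) (rename Sum.inr q) = C q :=
    DFunLike.congr_fun (sumAlgEquiv_comp_rename_inr ℤ (Fin n) (Fin r × ℤ)) q
  simp only [Finsupp.linearCombination_apply, Finsupp.sum, map_sum, map_mul, hcoeff,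
    sumAlgEquiv_factSchur, smul_eq_C_mul]

end Transport

theorem factorial_schur_basis_general {n : ℕ} {R : Type*} [CommRing R] (y : ℤ → R)
    {p : MvPolynomial (Fin n) R} (hp : p.IsSymmetric) :
    ∃! c : {l : Fin n → ℕ // IsPartition l} →₀ R,
      p = Finsupp.linearCombination R (fun lam => factorialSchurPoly y lam.1) c := by
  rcases subsingleton_or_nontrivial R with _ | _
  · exact ⟨0, Subsingleton.elim _ _, fun _ _ => Subsingleton.elim _ _⟩
  have hspan : p ∈ Subalgebra.toSubmodule (symmetricSubalgebra (Fin n) R) := hp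
  rw [← span_factorialSchurPoly n y] at hspan
  obtain ⟨c, hc⟩ := Finsupp.mem_span_range_iff_exists_finsupp.1 hspan
  exact ⟨c, hc.symm, fun d hd =>
    linearIndependent_factorialSchurPoly n y (hd.symm.trans hc.symm)⟩

/-- for a fixed family `y^{(i)}`, the factorial Schur polynomials
`s_λ(x|y^{(i)})`, `λ ∈ P_n`, form a `ℤ[y]`-basis of the ring of polynomials in the
`x` and `y` variables which are symmetric in the `x` variables: every symmetric-in-`x`
polynomial is uniquely a finitely supported `ℤ[y]`-linear combination of them. -/
theorem factorial_schur_basis (n r : ℕ) (hn : 1 ≤ n) (hr : 1 ≤ r) (i : Fin r)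
    (p : MvPolynomial (Fin n ⊕ Fin r × ℤ) ℤ)
    (hp : ∀ σ : Equiv.Perm (Fin n), rename (Sum.map σ id) p = p) :
    ∃! c : {l : Fin n → ℕ // IsPartition l} →₀ MvPolynomial (Fin r × ℤ) ℤ,
      p = c.sum fun lam q => rename Sum.inr q * factSchur n r i lam.1 := by
  simp only [← (sumAlgEquiv ℤ (Fin n) (Fin r × ℤ)).injective.eq_iff, sumAlgEquiv_sum_factSchur]
  exact factorial_schur_basis_general _ fun σ => by rw [rename_sumAlgEquiv, hp]
end
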